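/- In the setting of the previous statement (Assumption 1 of the paper: densities p(θ,x,y) with p(θ₀,·,·) ≡ 1 differentiable at θ₀, ψ-irreducibility, minorization on a set K, drift condition ∫V dP(θ)(x,·) ≤ λV(x) + b·1_K(x) with λ ∈ (0,1), V-operator-norm differentiability at θ₀, sup_x g_{ii}(x)/V(x) < ∞, sup_x |f(x)|/√(V(x)) < ∞, invariant probability π for P(θ₀) with ∫V dπ < ∞, initial distribution μ with ∫V dμ < ∞), let additionally f̂ : X → ℝ be measurable with |f̂(x)| ≤ c·√(V(x)) and f̂ − P(θ₀)f̂ = f − α(θ₀) pointwise, where α(θ₀) = ∫f dπ. Define g_{0i}(x) = g_{i0}(x) = ∫ f̂(y)·∂_i p(θ₀,x,y) P(θ₀,x,dy) for 1 ≤ i ≤ d, g_{00}(x) = ∫ f̂(y)² P(θ₀,x,dy) − (∫ f̂(y) P(θ₀,x,dy))², and let Σ ∈ ℝ^{(d+1)×(d+1)} have entries Σ_{ij} = ∫ g_{ij} dπ for 0 ≤ i,j ≤ d. Then the laws of the ℝ^d-valued random vectors (α_n − α(θ₀))·M_n converge weakly, as n → ∞, to the pushforward of the centered multivariate Gaussian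 distribution on ℝ^{d+1} with covariance Σ under the map z = (z₀, z₁, …, z_d) ↦ z₀·(z₁, …, z_d). -/

import Mathlib

open MeasureTheory ProbabilityTheory Filter
open scoped ENNReal NNReal Topology

noncomputable section

/-- The `k`-step transition kernel `P^k`. -/
def kpow {X : Type*} [MeasurableSpace X] (P : Kernel X X) : ℕ → Kernel X X
  | 0 => Kernel.id
  | k + 1 => P ∘ₖ kpow P k

/-- `Pμ` is the law on path space of the Markov chain with initial distribution `μ`
and one-step transition kernel `P`. -/
def IsMarkovChainLaw {X : Type*} [MeasurableSpace X] (μ : Measure X) (P : Kernel X X)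
    (Pμ : Measure (ℕ → X)) : Prop :=
  IsProbabilityMeasure Pμ ∧
  Pμ.map (fun ω => ω 0) = μ ∧
  ∀ (n : ℕ) (g : (Fin (n + 1) → X) → ℝ≥0∞) (h : X → ℝ≥0∞),
    Measurable g → Measurable h →
    ∫⁻ ω, g (fun i => ω i) * h (ω (n + 1)) ∂Pμ
      = ∫⁻ ω, g (fun i => ω i) * ∫⁻ y, h y ∂(P (ω n)) ∂Pμ

/-!
Write `u` for the solution of Poisson's equation. Up to the boundary term `u(Φ₀) - u(Φₙ)`, which is
negligible after division by `√n`, the centered sums of `f` are a martingale with increments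
`u(Φⱼ) - (P u)(Φⱼ₋₁)`, and the gradient of the log-likelihood is another one, since differentiating
`∫ p(θ, x, y) P(θ₀, x, dy) = 1` shows that the scores have conditional mean zero. A central limit
theorem for the joint martingale and the continuous map `z ↦ z₀ (z₁, …, z_d)` give the result.

The conditional variance of a linear combination of these increments is a function `w` of the state,
bounded by a multiple of `V`. Drift and minorization make suitable averages of the powers of `P`
contract the `V`-weighted oscillation, so `w - ∫ w dπ` is a coboundary `H - P H` up to an
arbitrarily small multiple of `V`; correcting the characteristic function of the partial sums by
`1 - s² H / 2` makes it a product of constant factors up to negligible remainders.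
-/

section WeightedOscillation

variable {X : Type*}

theorem exists_forall_abs_sub_le_of_oscillation_le [Nonempty X] {φ W : X → ℝ}
    (h : ∀ x y, |φ x - φ y| ≤ W x + W y) : ∃ c, ∀ x, |φ x - c| ≤ W x := by
  have hle : ∀ x y, φ x - W x ≤ φ y + W y := fun x y => by linarith [(abs_le.1 (h x y)).2]
  obtain ⟨c, hlower, hupper⟩ := exists_between_of_forall_le
    (Set.range_nonempty fun x => φ x - W x) (Set.range_nonempty fun x => φ x + W x)
    (Set.forall_mem_range.2 fun x => Set.forall_mem_range.2 (hle x))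
  exact ⟨c, fun x => abs_sub_le_iff.2
    ⟨by linarith [hlower ⟨x, rfl⟩], by linarith [hupper ⟨x, rfl⟩]⟩⟩

variable [MeasurableSpace X]

theorem abs_integral_sub_integral_le_of_measure_le {μ ν : Measure X} (hνμ : ν ≤ μ)
    {φ W : X → ℝ} (hφ : Integrable φ μ) (hW : Integrable W μ) (hφW : ∀ x, |φ x| ≤ W x) :
    |∫ x, φ x ∂μ - ∫ x, φ x ∂ν| ≤ ∫ x, W x ∂μ - ∫ x, W x ∂ν := by
  have hφν := hφ.mono_measure hνμ
  have hWν := hW.mono_measure hνμ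
  have hsub : ∫ x, (W x - φ x) ∂ν ≤ ∫ x, (W x - φ x) ∂μ :=
    integral_mono_measure hνμ (ae_of_all _ fun x => sub_nonneg.2 (le_of_abs_le (hφW x)))
      (hW.sub hφ)
  have hadd : ∫ x, (W x + φ x) ∂ν ≤ ∫ x, (W x + φ x) ∂μ :=
    integral_mono_measure hνμ
      (ae_of_all _ fun x => neg_le_iff_add_nonneg'.1 (neg_le_of_abs_le (hφW x))) (hW.add hφ)
  rw [integral_sub hWν hφν, integral_sub hW hφ] at hsub
  rw [integral_add hWν hφν, integral_add hW hφ] at hadd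
  exact abs_sub_le_iff.2 ⟨by linarith, by linarith⟩

/-- The common part `ν` cancels in the difference; it may be taken to be `0`. -/
theorem abs_integral_sub_integral_le_of_oscillation_le {μ₁ μ₂ ν : Measure X}
    [IsProbabilityMeasure μ₁] [IsProbabilityMeasure μ₂] (h₁ : ν ≤ μ₁) (h₂ : ν ≤ μ₂)
    {φ W : X → ℝ} (hφ : Measurable φ) (hW₁ : Integrable W μ₁) (hW₂ : Integrable W μ₂)
    (hosc : ∀ x y, |φ x - φ y| ≤ W x + W y) :
    |∫ x, φ x ∂μ₁ - ∫ x, φ x ∂μ₂| ≤ ∫ x, W x ∂μ₁ + ∫ x, W x ∂μ₂ - 2 * ∫ x, W x ∂ν := by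
  have : Nonempty X := nonempty_of_isProbabilityMeasure μ₁
  obtain ⟨c, hc⟩ := exists_forall_abs_sub_le_of_oscillation_le hosc
  have hcentred : ∀ {μ : Measure X}, Integrable W μ → Integrable (fun x => φ x - c) μ :=
    fun hW => hW.mono' (hφ.sub_const c).aestronglyMeasurable (ae_of_all _ hc)
  have hsub : ∀ (μ : Measure X) [IsProbabilityMeasure μ], Integrable W μ →
      ∫ x, (φ x - c) ∂μ = ∫ x, φ x ∂μ - c := fun μ _ hW => by
    have hφμ : Integrable φ μ :=
      ((hcentred hW).add (integrable_const c)).congr (ae_of_all _ fun x => sub_add_cancel _ _)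
    rw [integral_sub hφμ (integrable_const c), integral_const, probReal_univ, one_smul]
  have hdev₁ := abs_integral_sub_integral_le_of_measure_le h₁ (hcentred hW₁) hW₁ hc
  have hdev₂ := abs_integral_sub_integral_le_of_measure_le h₂ (hcentred hW₂) hW₂ hc
  rw [hsub μ₁ hW₁] at hdev₁
  rw [hsub μ₂ hW₂] at hdev₂
  rw [abs_le] at *
  constructor <;> linarith

/-- Far pairs (`r ≤ s`) gain from the drift alone and near pairs from the overlap `η`; the weight
`β` is chosen so small that the overlap outweighs `2 * β * B`. -/
theorem exists_weight_and_rate {γ B r η : ℝ} (hγ0 : 0 ≤ γ) (hγ1 : γ < 1) (hB : 0 ≤ B)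
    (hr : 2 * B + γ * r < r) (hη : 0 < η) :
    ∃ β > 0, ∃ ρ, 0 ≤ ρ ∧ ρ < 1 ∧ ∀ s, 0 ≤ s →
      (r ≤ s → 2 + β * (γ * s + 2 * B) ≤ ρ * (2 + β * s)) ∧
      2 + β * (γ * s + 2 * B) - 2 * η ≤ ρ * (2 + β * s) := by
  have hr0 : 0 ≤ r := by nlinarith
  obtain ⟨β, hβ, hβB⟩ : ∃ β > 0, 2 * β * B ≤ η :=
    ⟨η / (2 * (B + 1)), by positivity, by
      rw [mul_comm 2, mul_assoc, div_mul_eq_mul_div, div_le_iff₀ (by positivity)]; nlinarith⟩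
  obtain ⟨τ, hτ0, hτη, hτγ, hτr⟩ : ∃ τ > 0, τ ≤ η / 2 ∧ τ ≤ 1 - γ ∧
      τ * (2 + β * r) ≤ β * (r - γ * r - 2 * B) := by
    have ha : 0 < β * (r - γ * r - 2 * B) := mul_pos hβ (by linarith)
    refine ⟨min (η / 2) (min (1 - γ) (β * (r - γ * r - 2 * B) / (2 + β * r))),
      lt_min (by positivity) (lt_min (by linarith) (by positivity)), min_le_left _ _,
      (min_le_right _ _).trans (min_le_left _ _), ?_⟩
    rw [← le_div_iff₀ (by positivity)]
    exact (min_le_right _ _).trans (min_le_right _ _)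
  have hrate : 0 ≤ β * (1 - γ - τ) := mul_nonneg hβ.le (by linarith)
  refine ⟨β, hβ, 1 - τ, by linarith, by linarith, fun s hs => ⟨fun hrs => ?_, ?_⟩⟩
  · nlinarith [mul_nonneg hrate (sub_nonneg.2 hrs)]
  · nlinarith [mul_nonneg hrate hs]

/-- The Hairer–Mattingly form of Harris' theorem. -/
theorem exists_weighted_oscillation_contraction {κ : X → Measure X}
    [∀ x, IsProbabilityMeasure (κ x)] {V : X → ℝ} (hV0 : ∀ x, 0 ≤ V x)
    (hV : ∀ x, Integrable V (κ x)) {γ B r : ℝ} (hγ0 : 0 ≤ γ) (hγ1 : γ < 1) (hB : 0 ≤ B)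
    (hr : 2 * B + γ * r < r) (hdrift : ∀ x, ∫ y, V y ∂(κ x) ≤ γ * V x + B)
    {ν : Measure X} (hν : 0 < ν.real Set.univ) (hminor : ∀ x, V x ≤ r → ν ≤ κ x) :
    ∃ β > 0, ∃ ρ, 0 ≤ ρ ∧ ρ < 1 ∧ ∀ φ : X → ℝ, Measurable φ → ∀ L, 0 ≤ L →
      (∀ x y, |φ x - φ y| ≤ L * (2 + β * (V x + V y))) →
      ∀ x y, |∫ z, φ z ∂(κ x) - ∫ z, φ z ∂(κ y)| ≤ ρ * (L * (2 + β * (V x + V y))) := by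
  obtain ⟨β, hβ, ρ, hρ0, hρ1, hgain⟩ := exists_weight_and_rate hγ0 hγ1 hB hr hν
  refine ⟨β, hβ, ρ, hρ0, hρ1, fun φ hφ L hL hosc x y => ?_⟩
  obtain ⟨hfargain, hneargain⟩ := hgain _ (add_nonneg (hV0 x) (hV0 y))
  have hW : ∀ x, Integrable (fun z => L * (1 + β * V z)) (κ x) := fun x =>
    ((integrable_const 1).add ((hV x).const_mul β)).const_mul L
  have hWle : ∀ x, ∫ z, L * (1 + β * V z) ∂(κ x) ≤ L * (1 + β * (γ * V x + B)) := fun x => by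
    rw [integral_const_mul, integral_add (integrable_const 1) ((hV x).const_mul β),
      integral_const_mul, integral_const, probReal_univ, one_smul]
    have := hdrift x
    gcongr
  have hosc' : ∀ x y, |φ x - φ y| ≤ L * (1 + β * V x) + L * (1 + β * V y) := fun x y =>
    (hosc x y).trans_eq (by ring)
  obtain hfar | hnear := le_or_gt r (V x + V y)
  · have h := abs_integral_sub_integral_le_of_oscillation_le (Measure.zero_le (κ x))
      (Measure.zero_le (κ y)) hφ (hW x) (hW y) hosc'
    rw [integral_zero_measure] at h
    linarith [hWle x, hWle y, mul_le_mul_of_nonneg_left (hfargain hfar) hL]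
  · have hνx := hminor x (by linarith [hV0 y])
    have hνy := hminor y (by linarith [hV0 x])
    have hνW : L * ν.real Set.univ ≤ ∫ z, L * (1 + β * V z) ∂ν := by
      have := isFiniteMeasure_of_le (κ x) hνx
      have hle : ∀ z, L ≤ L * (1 + β * V z) := fun z =>
        le_mul_of_one_le_right hL (le_add_of_nonneg_right (mul_nonneg hβ.le (hV0 z)))
      simpa [mul_comm] using integral_mono (integrable_const L) ((hW x).mono_measure hνx) hle
    have h := abs_integral_sub_integral_le_of_oscillation_le hνx hνy hφ (hW x) (hW y) hosc'
    linarith [hWle x, hWle y, mul_le_mul_of_nonneg_left hneargain hL]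

end WeightedOscillation

section GeometricDrift

variable {X : Type*} [MeasurableSpace X]

/-- The measurable functions `u` with `sup |u| / V < ∞`. -/
def weightedBounded (V : X → ℝ) : Submodule ℝ (X → ℝ) where
  carrier := {u | Measurable u ∧ ∃ C, 0 ≤ C ∧ ∀ x, |u x| ≤ C * V x}
  zero_mem' := ⟨measurable_zero, 0, le_rfl, fun x => by simp⟩
  add_mem' := by
    rintro u v ⟨hu, C, hC, huC⟩ ⟨hv, D, hD, hvD⟩
    refine ⟨hu.add hv, C + D, add_nonneg hC hD, fun x => ?_⟩
    exact (abs_add_le _ _).trans ((add_le_add (huC x) (hvD x)).trans_eq (add_mul _ _ _).symm)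
  smul_mem' := by
    rintro a u ⟨hu, C, hC, huC⟩
    refine ⟨hu.const_smul a, |a| * C, mul_nonneg (abs_nonneg a) hC, fun x => ?_⟩
    rw [Pi.smul_apply, smul_eq_mul, abs_mul, mul_assoc]
    exact mul_le_mul_of_nonneg_left (huC x) (abs_nonneg a)

theorem integrable_of_mem_weightedBounded {V u : X → ℝ} {μ : Measure X} (hV : Integrable V μ)
    (hu : u ∈ weightedBounded V) : Integrable u μ := by
  obtain ⟨hum, C, -, huC⟩ := hu
  exact (hV.const_mul C).mono' hum.aestronglyMeasurable (ae_of_all _ huC)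

/-- The geometric (Foster–Lyapunov) drift condition `P V ≤ l V + b` with `l < 1`. The integrability
field keeps the Bochner integral on the left from being a junk `0`. -/
structure GeometricDrift (P : Kernel X X) (V : X → ℝ) (l b : ℝ) : Prop where
  measurable : Measurable V
  one_le (x : X) : 1 ≤ V x
  rate_nonneg : 0 ≤ l
  rate_lt_one : l < 1
  const_nonneg : 0 ≤ b
  integrable (x : X) : Integrable V (P x)
  integral_le (x : X) : ∫ y, V y ∂(P x) ≤ l * V x + b

namespace GeometricDrift

variable {P : Kernel X X} {V : X → ℝ} {l b : ℝ}

theorem nonneg (h : GeometricDrift P V l b) (x : X) : 0 ≤ V x := zero_le_one.trans (h.one_le x)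

theorem const_mem (h : GeometricDrift P V l b) (a : ℝ) :
    (fun _ => a : X → ℝ) ∈ weightedBounded V :=
  ⟨measurable_const, |a|, abs_nonneg a, fun x =>
    le_mul_of_one_le_right (abs_nonneg a) (h.one_le x)⟩

theorem self_mem (h : GeometricDrift P V l b) : V ∈ weightedBounded V :=
  ⟨h.measurable, 1, zero_le_one, fun x => by rw [abs_of_nonneg (h.nonneg x), one_mul]⟩

theorem integrable_of_mem (h : GeometricDrift P V l b) {u : X → ℝ} (hu : u ∈ weightedBounded V)
    (x : X) : Integrable u (P x) :=
  integrable_of_mem_weightedBounded (h.integrable x) hu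

/-- The transition operator `u ↦ P u` on the functions bounded by a multiple of `V`. -/
def transition (h : GeometricDrift P V l b) : Module.End ℝ (weightedBounded V) where
  toFun u := ⟨fun x => ∫ y, (u : X → ℝ) y ∂(P x), by
    obtain ⟨u, hu⟩ := u
    obtain ⟨hum, C, hC, huC⟩ := id hu
    refine ⟨hum.stronglyMeasurable.integral_kernel.measurable, C * (l + b),
      mul_nonneg hC (add_nonneg h.rate_nonneg h.const_nonneg), fun x => ?_⟩
    calc |∫ y, u y ∂(P x)| ≤ ∫ y, |u y| ∂(P x) := abs_integral_le_integral_abs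
      _ ≤ ∫ y, C * V y ∂(P x) := integral_mono (h.integrable_of_mem hu x).abs
          ((h.integrable x).const_mul C) huC
      _ ≤ C * (l * V x + b) := by
          rw [integral_const_mul]; exact mul_le_mul_of_nonneg_left (h.integral_le x) hC
      _ ≤ C * (l + b) * V x := by
          rw [mul_assoc, add_mul]
          gcongr
          exact le_mul_of_one_le_right h.const_nonneg (h.one_le x)⟩
  map_add' u v := Subtype.ext <| funext fun x =>
    integral_add (h.integrable_of_mem u.2 x) (h.integrable_of_mem v.2 x)
  map_smul' a u := Subtype.ext <| funext fun x => integral_const_mul a (u : X → ℝ)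

theorem transition_apply (h : GeometricDrift P V l b) (u : weightedBounded V) (x : X) :
    (h.transition u : X → ℝ) x = ∫ y, (u : X → ℝ) y ∂(P x) := rfl

end GeometricDrift

theorem kpow_add (P : Kernel X X) (j k : ℕ) : kpow P (j + k) = kpow P k ∘ₖ kpow P j := by
  induction k with
  | zero => rw [add_zero, kpow, Kernel.id_comp]
  | succ k ih => rw [← add_assoc, kpow, kpow, ih, Kernel.comp_assoc]

theorem integral_kpow_zero (P : Kernel X X) {u : X → ℝ} (hu : Measurable u) (x : X) :
    ∫ y, u y ∂(kpow P 0 x) = u x := by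
  rw [kpow, Kernel.id_apply, integral_dirac' _ _ hu.stronglyMeasurable]

instance (P : Kernel X X) [IsMarkovKernel P] (k : ℕ) : IsMarkovKernel (kpow P k) := by
  induction k with
  | zero => unfold kpow; infer_instance
  | succ k ih => unfold kpow; infer_instance

namespace GeometricDrift

variable {P : Kernel X X} {V : X → ℝ} {l b : ℝ}

theorem integrable_kpow (h : GeometricDrift P V l b) (k : ℕ) (x : X) :
    Integrable V (kpow P k x) := by
  induction k with
  | zero =>
    rw [kpow, Kernel.id_apply]
    exact integrable_dirac' h.measurable.stronglyMeasurable enorm_lt_top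
  | succ k ih =>
    rw [kpow, integrable_comp_iff h.measurable.aestronglyMeasurable]
    refine ⟨ae_of_all _ h.integrable, ?_⟩
    simp_rw [Real.norm_of_nonneg (h.nonneg _)]
    exact integrable_of_mem_weightedBounded ih (h.transition ⟨V, h.self_mem⟩).2

theorem integrable_kpow_of_mem (h : GeometricDrift P V l b) {u : X → ℝ}
    (hu : u ∈ weightedBounded V) (k : ℕ) (x : X) : Integrable u (kpow P k x) :=
  integrable_of_mem_weightedBounded (h.integrable_kpow k x) hu

theorem integral_kpow_succ (h : GeometricDrift P V l b) {u : X → ℝ}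
    (hu : u ∈ weightedBounded V) (k : ℕ) (x : X) :
    ∫ y, u y ∂(kpow P (k + 1) x) = ∫ y, ∫ z, u z ∂(P y) ∂(kpow P k x) :=
  Kernel.integral_comp (h.integrable_kpow_of_mem hu (k + 1) x)

theorem transition_pow_apply (h : GeometricDrift P V l b) (k : ℕ) (u : weightedBounded V)
    (x : X) : ((h.transition ^ k) u : X → ℝ) x = ∫ y, (u : X → ℝ) y ∂(kpow P k x) := by
  induction k generalizing u with
  | zero => exact (integral_kpow_zero P u.2.1 x).symm
  | succ k ih =>
    rw [pow_succ, Module.End.mul_apply, ih, h.integral_kpow_succ u.2]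
    rfl

theorem integral_kpow_le [IsMarkovKernel P] (h : GeometricDrift P V l b) (k : ℕ) (x : X) :
    ∫ y, V y ∂(kpow P k x) ≤ l ^ k * V x + b / (1 - l) := by
  have hl := sub_pos.2 h.rate_lt_one
  induction k with
  | zero =>
    rw [integral_kpow_zero P h.measurable, pow_zero, one_mul]
    exact le_add_of_nonneg_right (div_nonneg h.const_nonneg hl.le)
  | succ k ih =>
    calc ∫ y, V y ∂(kpow P (k + 1) x) = ∫ y, ∫ z, V z ∂(P y) ∂(kpow P k x) :=
          h.integral_kpow_succ h.self_mem k x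
      _ ≤ ∫ y, (l * V y + b) ∂(kpow P k x) :=
          integral_mono (h.integrable_kpow_of_mem (h.transition ⟨V, h.self_mem⟩).2 k x)
            (((h.integrable_kpow k x).const_mul l).add (integrable_const b)) h.integral_le
      _ = l * ∫ y, V y ∂(kpow P k x) + b := by
          rw [integral_add ((h.integrable_kpow k x).const_mul l) (integrable_const b),
            integral_const_mul, integral_const, probReal_univ, one_smul]
      _ ≤ l * (l ^ k * V x + b / (1 - l)) + b := by
          gcongr
          exact h.rate_nonneg
      _ = l ^ (k + 1) * V x + b / (1 - l) := by field_simp; ring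

end GeometricDrift

end GeometricDrift

section Harris

variable {X : Type*} [MeasurableSpace X]

theorem smul_le_kpow_add_of_minorization {P : Kernel X X} {K : Set X} (hK : MeasurableSet K)
    {m : ℕ} {ν : Measure X} (hminor : ∀ x ∈ K, ν ≤ kpow P m x) (k : ℕ) (x : X) :
    kpow P k x K • ν ≤ kpow P (k + m) x := by
  refine Measure.le_iff.2 fun A hA => ?_
  rw [kpow_add, Kernel.comp_apply' _ _ _ hA, Measure.smul_apply, smul_eq_mul, mul_comm,
    ← setLIntegral_const]
  exact (setLIntegral_mono' hK fun y hy => hminor y hy A).trans (setLIntegral_le_lintegral _ _)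

/-- The averaged transition probabilities `N⁻¹ (P + P² + ⋯ + P^N)(x, ·)`; averaging removes any
periodicity of `P`. -/
def averagedKernel (P : Kernel X X) (N : ℕ) (x : X) : Measure X :=
  (N : ℝ≥0∞)⁻¹ • ∑ k ∈ Finset.range N, kpow P (k + 1) x

theorem isProbabilityMeasure_averagedKernel (P : Kernel X X) [IsMarkovKernel P] {N : ℕ}
    (hN : N ≠ 0) (x : X) : IsProbabilityMeasure (averagedKernel P N x) := by
  constructor
  simp only [averagedKernel, Measure.smul_apply, Measure.finsetSum_apply, measure_univ,
    Finset.sum_const, Finset.card_range, nsmul_eq_mul, mul_one, smul_eq_mul]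
  exact ENNReal.inv_mul_cancel (Nat.cast_ne_zero.2 hN) (ENNReal.natCast_ne_top N)

namespace GeometricDrift

variable {P : Kernel X X} {V : X → ℝ} {l b : ℝ}

theorem integrable_averagedKernel (h : GeometricDrift P V l b) {N : ℕ} (hN : N ≠ 0) (x : X) :
    Integrable V (averagedKernel P N x) :=
  (integrable_finsetSum_measure.2 fun k _ => h.integrable_kpow (k + 1) x).smul_measure
    (ENNReal.inv_ne_top.2 (Nat.cast_ne_zero.2 hN))

/-- The operator `N⁻¹ (P + P² + ⋯ + P^N)` induced by `averagedKernel P N`. -/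
def average (h : GeometricDrift P V l b) (N : ℕ) : Module.End ℝ (weightedBounded V) :=
  (N : ℝ)⁻¹ • ∑ k ∈ Finset.range N, h.transition ^ (k + 1)

theorem average_apply (h : GeometricDrift P V l b) (N : ℕ) (u : weightedBounded V) (x : X) :
    (h.average N u : X → ℝ) x = ∫ y, (u : X → ℝ) y ∂(averagedKernel P N x) := by
  rw [averagedKernel, integral_smul_measure,
    integral_finsetSum_measure fun k _ => h.integrable_kpow_of_mem u.2 (k + 1) x,
    ENNReal.toReal_inv, ENNReal.toReal_natCast]
  simp only [average, LinearMap.smul_apply, LinearMap.sum_apply, Submodule.coe_smul,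
    Submodule.coe_sum, Pi.smul_apply, Finset.sum_apply, h.transition_pow_apply]

theorem integral_averagedKernel_le [IsMarkovKernel P] (h : GeometricDrift P V l b) {N : ℕ}
    (hN : N ≠ 0) (x : X) : ∫ y, V y ∂(averagedKernel P N x) ≤ l * V x + b / (1 - l) := by
  have hterm : ∀ k ∈ Finset.range N, ∫ y, V y ∂(kpow P (k + 1) x) ≤ l * V x + b / (1 - l) :=
    fun k _ => (h.integral_kpow_le (k + 1) x).trans <| by
      gcongr
      · exact h.nonneg x
      · exact pow_le_of_le_one h.rate_nonneg h.rate_lt_one.le k.succ_ne_zero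
  have hsum := Finset.sum_le_card_nsmul _ _ _ hterm
  rw [averagedKernel, integral_smul_measure,
    integral_finsetSum_measure fun k _ => h.integrable_kpow (k + 1) x,
    ENNReal.toReal_inv, ENNReal.toReal_natCast, smul_eq_mul, inv_mul_le_iff₀ (by positivity)]
  rwa [Finset.card_range, nsmul_eq_mul] at hsum

section Visits

variable {K : Set X}

theorem integral_kpow_succ_le [IsMarkovKernel P] (h : GeometricDrift P V l b)
    (hK : MeasurableSet K)
    (hdrift : ∀ x, ∫ y, V y ∂(P x) ≤ l * V x + b * K.indicator (fun _ => 1) x)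
    (k : ℕ) (x : X) :
    ∫ y, V y ∂(kpow P (k + 1) x)
      ≤ l * ∫ y, V y ∂(kpow P k x) + b * (kpow P k x).real K := by
  have hV := (h.integrable_kpow k x).const_mul l
  have hind : Integrable (fun y => b * K.indicator (fun _ => (1 : ℝ)) y) (kpow P k x) :=
    ((integrable_const 1).indicator hK).const_mul b
  calc ∫ y, V y ∂(kpow P (k + 1) x) = ∫ y, ∫ z, V z ∂(P y) ∂(kpow P k x) :=
        h.integral_kpow_succ h.self_mem k x
    _ ≤ ∫ y, (l * V y + b * K.indicator (fun _ => 1) y) ∂(kpow P k x) :=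
        integral_mono (h.integrable_kpow_of_mem (h.transition ⟨V, h.self_mem⟩).2 k x)
          (hV.add hind) hdrift
    _ = l * ∫ y, V y ∂(kpow P k x) + b * (kpow P k x).real K := by
        rw [integral_add hV hind, integral_const_mul, integral_const_mul,
          integral_indicator_const _ hK, smul_eq_mul, mul_one]

/-- Without visits to `K` the mean of `V ≥ 1` would decay geometrically. -/
theorem one_le_add_sum_kpow_real [IsMarkovKernel P] (h : GeometricDrift P V l b)
    (hK : MeasurableSet K)
    (hdrift : ∀ x, ∫ y, V y ∂(P x) ≤ l * V x + b * K.indicator (fun _ => 1) x)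
    (n : ℕ) (x : X) :
    1 ≤ l ^ n * (V x + b) + b * ∑ i ∈ Finset.range n, (kpow P (i + 1) x).real K := by
  have hone : 1 ≤ ∫ y, V y ∂(kpow P (n + 1) x) := by
    simpa using integral_mono (integrable_const (1 : ℝ)) (h.integrable_kpow (n + 1) x) h.one_le
  refine hone.trans ?_
  clear hone
  induction n with
  | zero =>
    have hb : b * (kpow P 0 x).real K ≤ b :=
      mul_le_of_le_one_right h.const_nonneg measureReal_le_one
    have hl : l * V x ≤ V x := mul_le_of_le_one_left (h.nonneg x) h.rate_lt_one.le
    have := h.integral_kpow_succ_le hK hdrift 0 x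
    rw [integral_kpow_zero P h.measurable] at this
    simp only [pow_zero, Finset.range_zero, Finset.sum_empty]
    linarith
  | succ n ih =>
    set S := ∑ i ∈ Finset.range n, (kpow P (i + 1) x).real K
    have hS : l * (b * S) ≤ b * S := mul_le_of_le_one_left
      (mul_nonneg h.const_nonneg (Finset.sum_nonneg fun _ _ => measureReal_nonneg))
      h.rate_lt_one.le
    have := h.integral_kpow_succ_le hK hdrift (n + 1) x
    rw [Finset.sum_range_succ, pow_succ]
    linarith [mul_le_mul_of_nonneg_left ih h.rate_nonneg]

theorem exists_le_sum_kpow [IsMarkovKernel P] (h : GeometricDrift P V l b)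
    (hK : MeasurableSet K)
    (hdrift : ∀ x, ∫ y, V y ∂(P x) ≤ l * V x + b * K.indicator (fun _ => 1) x)
    (r : ℝ) :
    ∃ s : ℝ≥0∞, s ≠ 0 ∧ s ≠ ⊤ ∧
      ∃ n ≠ 0, ∀ x, V x ≤ r → s ≤ ∑ i ∈ Finset.range n, kpow P (i + 1) x K := by
  have hb := h.const_nonneg
  obtain ⟨n, hn, hn0⟩ : ∃ n : ℕ, l ^ n * (r + b) < 1 / 2 ∧ n ≠ 0 := by
    have hlim := (tendsto_pow_atTop_nhds_zero_of_lt_one h.rate_nonneg h.rate_lt_one).mul_const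
      (r + b)
    rw [zero_mul] at hlim
    exact ((hlim.eventually (gt_mem_nhds one_half_pos)).and (eventually_ne_atTop 0)).exists
  refine ⟨ENNReal.ofReal (1 / (2 * (b + 1))), by positivity, ENNReal.ofReal_ne_top, n, hn0,
    fun x hx => ?_⟩
  have hS : 0 ≤ ∑ i ∈ Finset.range n, (kpow P (i + 1) x).real K :=
    Finset.sum_nonneg fun _ _ => measureReal_nonneg
  have hle : l ^ n * (V x + b) ≤ l ^ n * (r + b) :=
    mul_le_mul_of_nonneg_left (by linarith) (pow_nonneg h.rate_nonneg n)
  have hreal : 1 / (2 * (b + 1)) ≤ ∑ i ∈ Finset.range n, (kpow P (i + 1) x).real K := by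
    rw [div_le_iff₀ (by positivity)]
    linarith [h.one_le_add_sum_kpow_real hK hdrift n x]
  calc ENNReal.ofReal (1 / (2 * (b + 1)))
      ≤ ENNReal.ofReal (∑ i ∈ Finset.range n, (kpow P (i + 1) x).real K) :=
        ENNReal.ofReal_le_ofReal hreal
    _ = ∑ i ∈ Finset.range n, kpow P (i + 1) x K := by
        rw [ENNReal.ofReal_sum_of_nonneg fun _ _ => measureReal_nonneg]
        exact Finset.sum_congr rfl fun _ _ => ofReal_measureReal

theorem exists_minorization_averagedKernel [IsMarkovKernel P] (h : GeometricDrift P V l b)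
    (hK : MeasurableSet K)
    (hdrift : ∀ x, ∫ y, V y ∂(P x) ≤ l * V x + b * K.indicator (fun _ => 1) x)
    {m : ℕ} {ν : Measure X} [IsFiniteMeasure ν] [NeZero ν]
    (hminor : ∀ x ∈ K, ν ≤ kpow P m x) (r : ℝ) :
    ∃ N ≠ 0, ∃ ν' : Measure X, 0 < ν'.real Set.univ ∧
      ∀ x, V x ≤ r → ν' ≤ averagedKernel P N x := by
  obtain ⟨s, hs0, hs, n, hn, hvisit⟩ := h.exists_le_sum_kpow hK hdrift r
  refine ⟨m + n, by omega, ((m + n : ℕ) : ℝ≥0∞)⁻¹ • s • ν, ?_, fun x hx => ?_⟩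
  · have hν : 0 < ν.real Set.univ := measureReal_univ_pos
    have hs' : 0 < s.toReal := ENNReal.toReal_pos hs0 hs
    simp only [measureReal_ennreal_smul_apply, ENNReal.toReal_inv, ENNReal.toReal_natCast]
    positivity
  · unfold averagedKernel
    gcongr
    calc s • ν ≤ (∑ i ∈ Finset.range n, kpow P (i + 1) x K) • ν := by gcongr; exact hvisit x hx
      _ = ∑ i ∈ Finset.range n, kpow P (i + 1) x K • ν := Finset.sum_smul
      _ ≤ ∑ i ∈ Finset.range n, kpow P (i + 1 + m) x :=
          Finset.sum_le_sum fun i _ => smul_le_kpow_add_of_minorization hK hminor (i + 1) x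
      _ = ∑ i ∈ Finset.range n, kpow P (m + i + 1) x := by
          simp only [add_comm _ m, add_assoc]
      _ ≤ ∑ k ∈ Finset.range (m + n), kpow P (k + 1) x := by
          rw [Finset.sum_range_add]; exact Measure.le_add_left le_rfl

end Visits

end GeometricDrift

end Harris

theorem integral_comp_measure {X Y : Type*} [MeasurableSpace X] [MeasurableSpace Y]
    {μ : Measure X} {κ : Kernel X Y} {u : Y → ℝ} (hu : Integrable u (κ ∘ₘ μ)) :
    ∫ y, u y ∂(κ ∘ₘ μ) = ∫ x, ∫ y, u y ∂(κ x) ∂μ := by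
  rw [Measure.comp_eq_comp_const_apply] at hu ⊢
  rw [Kernel.integral_comp hu, Kernel.const_apply]

section Ergodicity

variable {X : Type*} [MeasurableSpace X] {P : Kernel X X} {V : X → ℝ} {l b : ℝ} {π : Measure X}

/-- Every `V`-bounded function of `π`-mean zero is, up to an arbitrarily small multiple of `V`, a
coboundary `G - P G` of a `V`-bounded function. This form of ergodicity is all that the law of
large numbers needs; it avoids summing the series `∑ P^k u`, which diverges for periodic chains. -/
def IsVErgodic (P : Kernel X X) (V : X → ℝ) (π : Measure X) : Prop :=
  ∀ u ∈ weightedBounded V, ∫ x, u x ∂π = 0 → ∀ ε > 0,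
    ∃ G ∈ weightedBounded V, ∀ x, |u x - (G x - ∫ y, G y ∂(P x))| ≤ ε * V x

theorem abs_le_of_oscillation_le_of_integral_eq_zero [IsProbabilityMeasure π]
    (hV : Integrable V π) {φ : X → ℝ} (hφ : Integrable φ π) (hφ0 : ∫ y, φ y ∂π = 0) {L β : ℝ}
    {x : X} (hosc : ∀ y, |φ x - φ y| ≤ L * (2 + β * (V x + V y))) :
    |φ x| ≤ L * (2 + β * (V x + ∫ y, V y ∂π)) := by
  have hVx : Integrable (fun y => V x + V y) π := (integrable_const _).add hV
  calc |φ x| = |∫ y, (φ x - φ y) ∂π| := by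
        rw [integral_sub (integrable_const _) hφ, hφ0, integral_const, probReal_univ, one_smul,
          sub_zero]
    _ ≤ ∫ y, |φ x - φ y| ∂π := abs_integral_le_integral_abs
    _ ≤ ∫ y, L * (2 + β * (V x + V y)) ∂π :=
        integral_mono ((integrable_const _).sub hφ).abs
          (((integrable_const 2).add (hVx.const_mul β)).const_mul L) hosc
    _ = L * (2 + β * (V x + ∫ y, V y ∂π)) := by
        rw [integral_const_mul, integral_add (integrable_const 2) (hVx.const_mul β),
          integral_const_mul, integral_add (integrable_const _) hV]
        simp only [integral_const, probReal_univ, one_smul]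

namespace GeometricDrift

theorem one_sub_transition_dvd_one_sub_average_pow (h : GeometricDrift P V l b) {N : ℕ}
    (hN : N ≠ 0) (k : ℕ) : 1 - h.transition ∣ 1 - h.average N ^ k := by
  have haverage : 1 - h.average N
      = (N : ℝ)⁻¹ • ∑ k ∈ Finset.range N, (1 - h.transition ^ (k + 1)) := by
    rw [average, Finset.sum_sub_distrib (fun _ => (1 : Module.End ℝ (weightedBounded V))),
      Finset.sum_const, Finset.card_range, smul_sub,
      ← Nat.cast_smul_eq_nsmul ℝ, inv_smul_smul₀ (Nat.cast_ne_zero.2 hN)]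
  have hdvd : 1 - h.transition ∣ 1 - h.average N := by
    rw [haverage]
    exact dvd_smul_of_dvd _ (Finset.dvd_sum fun k _ => one_sub_dvd_one_sub_pow h.transition (k + 1))
  exact hdvd.trans (one_sub_dvd_one_sub_pow (h.average N) k)

theorem integral_transition (h : GeometricDrift P V l b) (hπ : Kernel.Invariant P π)
    (hV : Integrable V π) (u : weightedBounded V) :
    ∫ x, (h.transition u : X → ℝ) x ∂π = ∫ x, (u : X → ℝ) x ∂π := by
  have hu : Integrable (u : X → ℝ) (P ∘ₘ π) := by
    rw [hπ.def]; exact integrable_of_mem_weightedBounded hV u.2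
  have := integral_comp_measure hu
  rw [hπ.def] at this
  exact this.symm

theorem integral_average_pow (h : GeometricDrift P V l b) (hπ : Kernel.Invariant P π)
    (hV : Integrable V π) {N : ℕ} (hN : N ≠ 0) (k : ℕ) (u : weightedBounded V) :
    ∫ x, ((h.average N ^ k) u : X → ℝ) x ∂π = ∫ x, (u : X → ℝ) x ∂π := by
  obtain ⟨S, hS⟩ := h.one_sub_transition_dvd_one_sub_average_pow hN k
  have hint : ∀ v : weightedBounded V, Integrable (v : X → ℝ) π := fun v =>
    integrable_of_mem_weightedBounded hV v.2
  have hcob : (u : X → ℝ) - ((h.average N ^ k) u : X → ℝ)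
      = (S u : X → ℝ) - (h.transition (S u) : X → ℝ) :=
    congr_arg Subtype.val (LinearMap.congr_fun hS u)
  have := integral_sub' (hint u) (hint ((h.average N ^ k) u))
  rw [hcob, integral_sub' (hint _) (hint _), h.integral_transition hπ hV, sub_self] at this
  linarith

theorem exists_oscillation_average_pow_le [IsMarkovKernel P] (h : GeometricDrift P V l b)
    {K : Set X} (hK : MeasurableSet K)
    (hdrift : ∀ x, ∫ y, V y ∂(P x) ≤ l * V x + b * K.indicator (fun _ => 1) x)
    {m : ℕ} {ν : Measure X} [IsFiniteMeasure ν] [NeZero ν] (hminor : ∀ x ∈ K, ν ≤ kpow P m x) :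
    ∃ N ≠ 0, ∃ β ≥ 0, ∃ ρ, 0 ≤ ρ ∧ ρ < 1 ∧ ∀ u : weightedBounded V, ∃ L, 0 ≤ L ∧ ∀ k x y,
      |((h.average N ^ k) u : X → ℝ) x - ((h.average N ^ k) u : X → ℝ) y|
        ≤ ρ ^ k * L * (2 + β * (V x + V y)) := by
  have hl := sub_pos.2 h.rate_lt_one
  have hB : 0 ≤ b / (1 - l) := div_nonneg h.const_nonneg hl.le
  set B := b / (1 - l)
  obtain ⟨r, hr⟩ : ∃ r, 2 * B + l * r < r :=
    ⟨(2 * B + 1) / (1 - l), by linarith [mul_div_cancel₀ (2 * B + 1) hl.ne']⟩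
  obtain ⟨N, hN, ν', hν', hminorN⟩ := h.exists_minorization_averagedKernel hK hdrift hminor r
  have := isProbabilityMeasure_averagedKernel P hN
  obtain ⟨β, hβ, ρ, hρ0, hρ1, hcontract⟩ := exists_weighted_oscillation_contraction h.nonneg
    (h.integrable_averagedKernel hN) h.rate_nonneg h.rate_lt_one hB hr
    (h.integral_averagedKernel_le hN) hν' hminorN
  refine ⟨N, hN, β, hβ.le, ρ, hρ0, hρ1, fun u => ?_⟩
  obtain ⟨-, C, hC, huC⟩ := u.2
  refine ⟨C / β, by positivity, fun k => ?_⟩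
  induction k with
  | zero =>
    intro x y
    have hsplit : C / β * (2 + β * (V x + V y)) = 2 * (C / β) + (C * V x + C * V y) := by
      field_simp
    rw [pow_zero, pow_zero, one_mul, hsplit, Module.End.one_apply]
    linarith [abs_sub (u.1 x) (u.1 y), huC x, huC y, div_nonneg hC hβ.le]
  | succ k ih =>
    intro x y
    have := hcontract _ ((h.average N ^ k) u).2.1 (ρ ^ k * (C / β)) (by positivity) ih x y
    rw [pow_succ', Module.End.mul_apply, h.average_apply, h.average_apply, pow_succ']
    exact this.trans_eq (by ring)

theorem isVErgodic [IsMarkovKernel P] (h : GeometricDrift P V l b)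
    {K : Set X} (hK : MeasurableSet K)
    (hdrift : ∀ x, ∫ y, V y ∂(P x) ≤ l * V x + b * K.indicator (fun _ => 1) x)
    {m : ℕ} {ν : Measure X} [IsFiniteMeasure ν] [NeZero ν] (hminor : ∀ x ∈ K, ν ≤ kpow P m x)
    [IsProbabilityMeasure π] (hπ : Kernel.Invariant P π) (hV : Integrable V π) :
    IsVErgodic P V π := by
  obtain ⟨N, hN, β, hβ, ρ, hρ0, hρ1, hosc⟩ := h.exists_oscillation_average_pow_le hK hdrift hminor
  intro u hu hu0 ε hε
  obtain ⟨L, hL, hosc⟩ := hosc ⟨u, hu⟩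
  have hv : 0 ≤ ∫ x, V x ∂π := integral_nonneg h.nonneg
  set v := ∫ x, V x ∂π
  have hdecay : ∀ k x, |((h.average N ^ k) ⟨u, hu⟩ : X → ℝ) x|
      ≤ ρ ^ k * (L * (2 + β * (1 + v))) * V x := fun k x => by
    have hmean := h.integral_average_pow hπ hV hN k ⟨u, hu⟩
    refine (abs_le_of_oscillation_le_of_integral_eq_zero hV
      (integrable_of_mem_weightedBounded hV ((h.average N ^ k) ⟨u, hu⟩).2) (hmean.trans hu0)
      (hosc k x)).trans ?_
    have hVx : 2 + β * (V x + v) ≤ (2 + β * (1 + v)) * V x := by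
      nlinarith [h.one_le x, mul_nonneg (mul_nonneg hβ hv) (sub_nonneg.2 (h.one_le x))]
    rw [mul_assoc, mul_assoc, mul_assoc]
    gcongr
  obtain ⟨k, hk⟩ : ∃ k : ℕ, ρ ^ k * (L * (2 + β * (1 + v))) < ε := by
    have hlim := (tendsto_pow_atTop_nhds_zero_of_lt_one hρ0 hρ1).mul_const (L * (2 + β * (1 + v)))
    rw [zero_mul] at hlim
    exact (hlim.eventually (gt_mem_nhds hε)).exists
  obtain ⟨S, hS⟩ := h.one_sub_transition_dvd_one_sub_average_pow hN k
  refine ⟨S ⟨u, hu⟩, (S ⟨u, hu⟩).2, fun x => ?_⟩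
  have hcob : u x - ((h.average N ^ k) ⟨u, hu⟩ : X → ℝ) x
      = (S ⟨u, hu⟩ : X → ℝ) x - (h.transition (S ⟨u, hu⟩) : X → ℝ) x :=
    congr_fun (congr_arg Subtype.val (LinearMap.congr_fun hS ⟨u, hu⟩)) x
  rw [← h.transition_apply, ← hcob, sub_sub_cancel]
  exact (hdecay k x).trans (mul_le_mul_of_nonneg_right hk.le (h.nonneg x))

theorem isVErgodic_of_minorization [IsMarkovKernel P] (h : GeometricDrift P V l b)
    {K : Set X} (hK : MeasurableSet K)
    (hdrift : ∀ x, ∫ y, V y ∂(P x) ≤ l * V x + b * K.indicator (fun _ => 1) x)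
    {δ : ℝ} (hδ : 0 < δ) {m : ℕ} {ν : Measure X} [IsProbabilityMeasure ν]
    (hminor : ∀ x ∈ K, ∀ A, MeasurableSet A → ENNReal.ofReal δ * ν A ≤ kpow P m x A)
    [IsProbabilityMeasure π] (hπ : Kernel.Invariant P π) (hV : Integrable V π) :
    IsVErgodic P V π := by
  have hνfin : IsFiniteMeasure (ENNReal.ofReal δ • ν) := ν.smul_finite ENNReal.ofReal_ne_top
  have hνne : NeZero (ENNReal.ofReal δ • ν) := ⟨by simp [hδ, NeZero.ne ν]⟩
  exact h.isVErgodic hK hdrift (ν := ENNReal.ofReal δ • ν) (m := m)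
    (fun x hx => Measure.le_iff.2 (hminor x hx)) hπ hV

end GeometricDrift

end Ergodicity

section MeanErgodic

variable {X : Type*} [MeasurableSpace X] {P : Kernel X X} {V : X → ℝ} {l b : ℝ} {π μ : Measure X}

theorem kpow_succ_comp_measure (P : Kernel X X) (μ : Measure X) (j : ℕ) :
    kpow P (j + 1) ∘ₘ μ = P ∘ₘ (kpow P j ∘ₘ μ) := by
  rw [kpow, Measure.comp_assoc]

theorem abs_integral_le_of_abs_le_mul {u : X → ℝ} (hV : Integrable V μ) {C : ℝ}
    (hu : ∀ x, |u x| ≤ C * V x) : |∫ x, u x ∂μ| ≤ C * ∫ x, V x ∂μ :=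
  abs_integral_le_integral_abs.trans <| (integral_mono_of_nonneg (ae_of_all _ fun _ => abs_nonneg _)
    (hV.const_mul C) (ae_of_all _ hu)).trans_eq (integral_const_mul _ _)

namespace GeometricDrift

theorem integrable_comp_measure (h : GeometricDrift P V l b) (hμ : Integrable V μ) :
    Integrable V (P ∘ₘ μ) := by
  rw [Measure.integrable_comp_iff h.measurable.aestronglyMeasurable]
  refine ⟨ae_of_all _ h.integrable, ?_⟩
  simp_rw [Real.norm_of_nonneg (h.nonneg _)]
  exact integrable_of_mem_weightedBounded hμ (h.transition ⟨V, h.self_mem⟩).2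

theorem integrable_kpow_comp_measure (h : GeometricDrift P V l b) (hμ : Integrable V μ) (j : ℕ) :
    Integrable V (kpow P j ∘ₘ μ) := by
  induction j with
  | zero => rwa [kpow, Measure.id_comp]
  | succ j ih => rw [kpow_succ_comp_measure]; exact h.integrable_comp_measure ih

theorem integral_kpow_succ_comp_measure (h : GeometricDrift P V l b) (hμ : Integrable V μ)
    {u : X → ℝ} (hu : u ∈ weightedBounded V) (j : ℕ) :
    ∫ x, u x ∂(kpow P (j + 1) ∘ₘ μ) = ∫ x, ∫ y, u y ∂(P x) ∂(kpow P j ∘ₘ μ) := by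
  have hint := integrable_of_mem_weightedBounded (h.integrable_kpow_comp_measure hμ (j + 1)) hu
  rw [kpow_succ_comp_measure] at hint ⊢
  exact integral_comp_measure hint

variable [IsMarkovKernel P] [IsProbabilityMeasure μ]

theorem integral_kpow_comp_measure_le (h : GeometricDrift P V l b) (hμ : Integrable V μ) (j : ℕ) :
    ∫ x, V x ∂(kpow P j ∘ₘ μ) ≤ ∫ x, V x ∂μ + b / (1 - l) := by
  rw [integral_comp_measure (h.integrable_kpow_comp_measure hμ j)]
  calc ∫ x, ∫ y, V y ∂(kpow P j x) ∂μ ≤ ∫ x, (V x + b / (1 - l)) ∂μ := by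
        refine integral_mono_of_nonneg (ae_of_all _ fun x => integral_nonneg h.nonneg)
          (hμ.add (integrable_const _)) (ae_of_all _ fun x => ?_)
        refine (h.integral_kpow_le j x).trans (add_le_add_left ?_ _)
        exact mul_le_of_le_one_left (h.nonneg x) (pow_le_one₀ h.rate_nonneg h.rate_lt_one.le)
    _ = ∫ x, V x ∂μ + b / (1 - l) := by
        rw [integral_add hμ (integrable_const _), integral_const, probReal_univ, one_smul]

theorem abs_integral_kpow_comp_measure_le (h : GeometricDrift P V l b) (hμ : Integrable V μ)
    {u : X → ℝ} {C : ℝ} (hC : 0 ≤ C) (hu : ∀ x, |u x| ≤ C * V x) (j : ℕ) :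
    |∫ x, u x ∂(kpow P j ∘ₘ μ)| ≤ C * (∫ x, V x ∂μ + b / (1 - l)) :=
  (abs_integral_le_of_abs_le_mul (h.integrable_kpow_comp_measure hμ j) hu).trans
    (mul_le_mul_of_nonneg_left (h.integral_kpow_comp_measure_le hμ j) hC)

theorem abs_sum_integral_kpow_comp_measure_le (h : GeometricDrift P V l b) (hμ : Integrable V μ)
    {w G : X → ℝ} (hw : w ∈ weightedBounded V) (hG : G ∈ weightedBounded V) {ε C : ℝ} (hε : 0 ≤ ε)
    (hC : 0 ≤ C) (hGC : ∀ x, |G x| ≤ C * V x)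
    (hwG : ∀ x, |w x - (G x - ∫ y, G y ∂(P x))| ≤ ε * V x) (n : ℕ) :
    |∑ j ∈ Finset.range n, ∫ x, w x ∂(kpow P j ∘ₘ μ)|
      ≤ (2 * C + n * ε) * (∫ x, V x ∂μ + b / (1 - l)) := by
  have hint : ∀ j {u : X → ℝ}, u ∈ weightedBounded V → Integrable u (kpow P j ∘ₘ μ) := fun j _ =>
    integrable_of_mem_weightedBounded (h.integrable_kpow_comp_measure hμ j)
  have hPG : (fun x => ∫ y, G y ∂(P x)) ∈ weightedBounded V := (h.transition ⟨G, hG⟩).2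
  have hterm : ∀ j, ∫ x, w x ∂(kpow P j ∘ₘ μ)
      = (∫ x, G x ∂(kpow P j ∘ₘ μ) - ∫ x, G x ∂(kpow P (j + 1) ∘ₘ μ))
        + ∫ x, (w x - (G x - ∫ y, G y ∂(P x))) ∂(kpow P j ∘ₘ μ) := fun j => by
    have hGPG : Integrable (fun x => G x - ∫ y, G y ∂(P x)) (kpow P j ∘ₘ μ) :=
      (hint j hG).sub (hint j hPG)
    rw [integral_sub (hint j hw) hGPG, integral_sub (hint j hG) (hint j hPG),
      h.integral_kpow_succ_comp_measure hμ hG, add_sub_cancel]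
  have hrest : |∑ j ∈ Finset.range n, ∫ x, (w x - (G x - ∫ y, G y ∂(P x))) ∂(kpow P j ∘ₘ μ)|
      ≤ n * (ε * (∫ x, V x ∂μ + b / (1 - l))) := by
    refine (Finset.abs_sum_le_sum_abs _ _).trans ((Finset.sum_le_sum fun j _ =>
      h.abs_integral_kpow_comp_measure_le hμ hε hwG j).trans_eq ?_)
    rw [Finset.sum_const, Finset.card_range, nsmul_eq_mul]
  have h0 := h.abs_integral_kpow_comp_measure_le hμ hC hGC 0
  have hn := h.abs_integral_kpow_comp_measure_le hμ hC hGC n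
  simp_rw [hterm, Finset.sum_add_distrib]
  rw [Finset.sum_range_sub' fun j => ∫ x, G x ∂(kpow P j ∘ₘ μ)]
  refine (abs_add_le _ _).trans ?_
  linarith [abs_sub (∫ x, G x ∂(kpow P 0 ∘ₘ μ)) (∫ x, G x ∂(kpow P n ∘ₘ μ))]

variable [IsProbabilityMeasure π]

theorem tendsto_average_integral_kpow_comp_measure (h : GeometricDrift P V l b)
    (hP : IsVErgodic P V π) (hπ : Integrable V π) (hμ : Integrable V μ) {u : X → ℝ}
    (hu : u ∈ weightedBounded V) :
    Tendsto (fun n : ℕ => (n : ℝ)⁻¹ * ∑ j ∈ Finset.range n, ∫ x, u x ∂(kpow P j ∘ₘ μ)) atTop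
      (𝓝 (∫ x, u x ∂π)) := by
  have huπ := integrable_of_mem_weightedBounded hπ hu
  set M := ∫ x, V x ∂μ + b / (1 - l)
  have hM : 0 ≤ M := add_nonneg (integral_nonneg h.nonneg)
    (div_nonneg h.const_nonneg (sub_nonneg.2 h.rate_lt_one.le))
  set a := ∫ x, u x ∂π with ha
  have hcentred : (fun x => u x - a) ∈ weightedBounded V := sub_mem hu (h.const_mem a)
  have hmean : ∫ x, (u x - a) ∂π = 0 := by
    rw [integral_sub huπ (integrable_const a), integral_const, probReal_univ, one_smul, ha,
      sub_self]
  refine Metric.tendsto_atTop'.2 fun ε hε => ?_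
  obtain ⟨G, hG, hq⟩ := hP _ hcentred hmean (ε / (2 * (M + 1))) (by positivity)
  obtain ⟨C, hC, hGC⟩ := hG.2
  have hlim : Tendsto (fun n : ℕ => 2 * C * M / n) atTop (𝓝 0) :=
    tendsto_const_div_atTop_nhds_zero_nat _
  obtain ⟨n₀, hn₀⟩ := eventually_atTop.1 (hlim.eventually (gt_mem_nhds (half_pos hε)))
  refine ⟨n₀, fun n hn => ?_⟩
  have hn0 : (0 : ℝ) < n := Nat.cast_pos.2 (Nat.zero_lt_of_lt hn)
  have hsum : ∑ j ∈ Finset.range n, ∫ x, u x ∂(kpow P j ∘ₘ μ)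
      = n * a + ∑ j ∈ Finset.range n, ∫ x, (u x - a) ∂(kpow P j ∘ₘ μ) := by
    have hterm : ∀ j, ∫ x, (u x - a) ∂(kpow P j ∘ₘ μ) = ∫ x, u x ∂(kpow P j ∘ₘ μ) - a := fun j => by
      rw [integral_sub (integrable_of_mem_weightedBounded (h.integrable_kpow_comp_measure hμ j) hu)
        (integrable_const a), integral_const, probReal_univ, one_smul]
    simp_rw [hterm, Finset.sum_sub_distrib, Finset.sum_const, Finset.card_range, nsmul_eq_mul]
    ring
  have hbound := h.abs_sum_integral_kpow_comp_measure_le hμ hcentred hG (by positivity) hC hGC hq n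
  have hsmall : ε / (2 * (M + 1)) * M ≤ ε / 2 := by
    rw [div_mul_eq_mul_div, div_le_div_iff₀ (by positivity) two_pos]
    nlinarith
  have hlt := (div_lt_iff₀ hn0).1 (hn₀ n hn.le)
  rw [Real.dist_eq, hsum, mul_add, inv_mul_cancel_left₀ hn0.ne', add_sub_cancel_left, abs_mul,
    abs_of_pos (inv_pos.2 hn0), inv_mul_lt_iff₀ hn0]
  nlinarith

theorem tendsto_average_integral_kpow_comp_measure_zero (h : GeometricDrift P V l b)
    (hP : IsVErgodic P V π) (hπ : Integrable V π) (hμ : Integrable V μ) {R : ℝ → X → ℝ} {C : ℝ}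
    (hC : 0 ≤ C) (hm : ∀ s, Measurable (R s)) (hnonneg : ∀ s, 0 ≤ s → ∀ x, 0 ≤ R s x)
    (hle : ∀ s, 0 ≤ s → ∀ x, R s x ≤ C * V x) (hmono : ∀ x, MonotoneOn (R · x) (Set.Ici 0))
    (hlim : ∀ x, Tendsto (R · x) (𝓝[>] 0) (𝓝 0))
    {s : ℕ → ℝ} (hs0 : ∀ n, 0 ≤ s n) (hs : Tendsto s atTop (𝓝 0)) :
    Tendsto (fun n : ℕ => (n : ℝ)⁻¹ * ∑ j ∈ Finset.range n, ∫ x, R (s n) x ∂(kpow P j ∘ₘ μ))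
      atTop (𝓝 0) := by
  have habs : ∀ t, 0 ≤ t → ∀ x, |R t x| ≤ C * V x := fun t ht x => by
    rw [abs_of_nonneg (hnonneg t ht x)]; exact hle t ht x
  have hmem : ∀ t, 0 ≤ t → R t ∈ weightedBounded V := fun t ht => ⟨hm t, C, hC, habs t ht⟩
  have hint : ∀ j t, 0 ≤ t → Integrable (R t) (kpow P j ∘ₘ μ) := fun j t ht =>
    integrable_of_mem_weightedBounded (h.integrable_kpow_comp_measure hμ j) (hmem t ht)
  have hstat : Tendsto (fun t => ∫ x, R t x ∂π) (𝓝[>] 0) (𝓝 0) := by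
    have := tendsto_integral_filter_of_dominated_convergence (μ := π) (F := R)
      (l := 𝓝[>] (0 : ℝ)) (f := fun _ => 0) (fun x => C * V x)
      (.of_forall fun t => (hm t).aestronglyMeasurable)
      (eventually_mem_nhdsWithin.mono fun t ht => ae_of_all _ (habs t (le_of_lt ht)))
      (hπ.const_mul C) (ae_of_all _ hlim)
    rwa [integral_zero] at this
  refine tendsto_order.2 ⟨fun a ha => .of_forall fun n => ha.trans_le <| mul_nonneg (by positivity)
    (Finset.sum_nonneg fun j _ => integral_nonneg (hnonneg _ (hs0 n))), fun ε hε => ?_⟩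
  obtain ⟨t, htε, ht⟩ :=
    ((hstat.eventually (gt_mem_nhds hε)).and eventually_mem_nhdsWithin).exists
  have ht0 : 0 < t := ht
  filter_upwards [(h.tendsto_average_integral_kpow_comp_measure hP hπ hμ
    (hmem t ht0.le)).eventually (gt_mem_nhds htε), hs.eventually (gt_mem_nhds ht0)] with n hn hsn
  refine lt_of_le_of_lt ?_ hn
  gcongr with j
  · exact hint j _ (hs0 n)
  · exact hint j t ht0.le
  · exact fun x => hmono x (hs0 n) ht0.le hsn.le

end GeometricDrift

end MeanErgodic

section Chain

variable {X : Type*} [MeasurableSpace X] {P : Kernel X X} {μ : Measure X} {Pμ : Measure (ℕ → X)}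

/-- The trajectory `(Φ₀, …, Φₙ)` of the chain up to time `n`. -/
def past (n : ℕ) (ω : ℕ → X) : Fin (n + 1) → X := fun i => ω i

theorem measurable_past (n : ℕ) : Measurable (past n : (ℕ → X) → Fin (n + 1) → X) :=
  measurable_pi_lambda _ fun _ => measurable_pi_apply _

/-- The conditional law of `Φₙ₊₁` given `(Φ₀, …, Φₙ)`, as a kernel in the whole trajectory. -/
def lastTransition (P : Kernel X X) (n : ℕ) : Kernel (Fin (n + 1) → X) X :=
  P.comap (fun z => z (Fin.last n)) (measurable_pi_apply _)

instance [IsMarkovKernel P] (n : ℕ) : IsMarkovKernel (lastTransition P n) := by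
  unfold lastTransition; infer_instance

namespace IsMarkovChainLaw

theorem map_past_prodMk [IsMarkovKernel P] (h : IsMarkovChainLaw μ P Pμ) (n : ℕ) :
    Pμ.map (fun ω => (past n ω, ω (n + 1))) = (Pμ.map (past n)) ⊗ₘ lastTransition P n := by
  have := h.1
  have hm : Measurable fun ω : ℕ → X => (past n ω, ω (n + 1)) :=
    (measurable_past n).prodMk (measurable_pi_apply _)
  refine Measure.ext_prod fun {s t} hs ht => ?_
  calc Pμ.map (fun ω => (past n ω, ω (n + 1))) (s ×ˢ t)
      = ∫⁻ ω, s.indicator 1 (past n ω) * t.indicator 1 (ω (n + 1)) ∂Pμ := by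
        rw [← lintegral_indicator_one (hs.prod ht),
          lintegral_map (measurable_one.indicator (hs.prod ht)) hm]
        simp_rw [Set.indicator_prod_one]
    _ = ∫⁻ ω, s.indicator 1 (past n ω) * ∫⁻ y, t.indicator 1 y ∂(P (ω n)) ∂Pμ :=
        h.2.2 n _ _ (measurable_one.indicator hs) (measurable_one.indicator ht)
    _ = ∫⁻ ω, s.indicator (fun z => lastTransition P n z t) (past n ω) ∂Pμ := by
        refine lintegral_congr fun ω => ?_
        by_cases hω : past n ω ∈ s
        · rw [Set.indicator_of_mem hω, Set.indicator_of_mem hω, lintegral_indicator_one ht,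
            Pi.one_apply, one_mul]
          rfl
        · rw [Set.indicator_of_notMem hω, Set.indicator_of_notMem hω, zero_mul]
    _ = (Pμ.map (past n) ⊗ₘ lastTransition P n) (s ×ˢ t) := by
        rw [Measure.compProd_apply_prod hs ht, ← lintegral_indicator hs,
          lintegral_map ((Kernel.measurable_coe _ ht).indicator hs) (measurable_past n)]

theorem map_eval (h : IsMarkovChainLaw μ P Pμ) (j : ℕ) :
    Pμ.map (fun ω => ω j) = kpow P j ∘ₘ μ := by
  induction j with
  | zero => rw [kpow, Measure.id_comp, h.2.1]
  | succ j ih =>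
    ext s hs
    have := h.2.2 j 1 (s.indicator 1) measurable_one (measurable_one.indicator hs)
    simp only [Pi.one_apply, one_mul, lintegral_indicator_one hs] at this
    rw [kpow_succ_comp_measure, ← ih, Measure.bind_apply hs P.aemeasurable,
      lintegral_map (Kernel.measurable_coe _ hs) (measurable_pi_apply _), ← this,
      ← lintegral_indicator_one hs,
      lintegral_map (measurable_one.indicator hs) (measurable_pi_apply _)]

theorem integral_past_succ [IsMarkovKernel P] (h : IsMarkovChainLaw μ P Pμ) {E : Type*}
    [NormedAddCommGroup E] [NormedSpace ℝ E] (n : ℕ) {F : (Fin (n + 1) → X) × X → E}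
    (hF : StronglyMeasurable F) (hint : Integrable (fun ω => F (past n ω, ω (n + 1))) Pμ) :
    ∫ ω, F (past n ω, ω (n + 1)) ∂Pμ = ∫ ω, ∫ y, F (past n ω, y) ∂(P (ω n)) ∂Pμ := by
  have := h.1
  have hm : Measurable fun ω : ℕ → X => (past n ω, ω (n + 1)) :=
    (measurable_past n).prodMk (measurable_pi_apply _)
  have := (integrable_map_measure hF.aestronglyMeasurable hm.aemeasurable).2 hint
  rw [← integral_map hm.aemeasurable hF.aestronglyMeasurable, h.map_past_prodMk,
    Measure.integral_compProd (h.map_past_prodMk n ▸ this),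
    integral_map (measurable_past n).aemeasurable
      hF.integral_kernel_prod_right'.aestronglyMeasurable]
  rfl

end IsMarkovChainLaw

end Chain

section SecondOrderExpansion

theorem norm_cexp_mul_I_sub_one_le (z : ℝ) :
    ‖Complex.exp (z * Complex.I) - 1‖ ≤ 2 * min 1 |z| := by
  have hle : ‖Complex.exp (z * Complex.I) - 1‖ ≤ |z| := by
    rw [mul_comm]; exact Real.norm_exp_I_mul_ofReal_sub_one_le
  have htwo : ‖Complex.exp (z * Complex.I) - 1‖ ≤ 2 := by
    refine (norm_sub_le _ _).trans_eq ?_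
    rw [Complex.norm_exp_ofReal_mul_I, norm_one, one_add_one_eq_two]
  rcases le_total 1 |z| with h | h
  · rwa [min_eq_left h, mul_one]
  · rw [min_eq_right h]; linarith [abs_nonneg z]

theorem norm_cexp_mul_I_sub_taylor_two_le (z : ℝ) :
    ‖Complex.exp (z * Complex.I) - (1 + z * Complex.I - z ^ 2 / 2)‖ ≤ 4 * z ^ 2 * min 1 |z| := by
  have hnorm : ‖(z : ℂ) * Complex.I‖ = |z| := by
    rw [norm_mul, Complex.norm_I, mul_one, Complex.norm_real, Real.norm_eq_abs]
  rcases le_total |z| 1 with h | h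
  · have htaylor : ∑ m ∈ Finset.range 3, ((z : ℂ) * Complex.I) ^ m / (m.factorial : ℂ)
        = 1 + z * Complex.I - z ^ 2 / 2 := by
      simp only [Finset.sum_range_succ, Finset.range_zero, Finset.sum_empty, Nat.factorial, mul_pow,
        Complex.I_sq]
      push_cast
      ring
    have := Complex.exp_bound (hnorm.trans_le h) (n := 3) (by norm_num)
    rw [htaylor, hnorm] at this
    have hcube : 4 * z ^ 2 * |z| = 4 * |z| ^ 3 := by rw [← sq_abs]; ring
    rw [min_eq_right h, hcube]
    refine this.trans ?_
    norm_num [Nat.factorial]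
    linarith [pow_nonneg (abs_nonneg z) 3]
  · rw [min_eq_left h]
    have hexp := (norm_cexp_mul_I_sub_one_le z).trans
      (mul_le_mul_of_nonneg_left (min_le_left 1 |z|) two_pos.le)
    calc ‖Complex.exp (z * Complex.I) - (1 + z * Complex.I - z ^ 2 / 2)‖
        = ‖(Complex.exp (z * Complex.I) - 1) - z * Complex.I + (z ^ 2 / 2 : ℝ)‖ := by
          push_cast; ring_nf
      _ ≤ ‖Complex.exp (z * Complex.I) - 1‖ + ‖z * Complex.I‖ + ‖((z ^ 2 / 2 : ℝ) : ℂ)‖ :=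
          (norm_add_le _ _).trans (add_le_add_left (norm_sub_le _ _) _)
      _ ≤ 4 * z ^ 2 * 1 := by
          rw [hnorm, Complex.norm_real, Real.norm_of_nonneg (by positivity)]
          nlinarith [sq_abs z]

/-- The integrand of the remainder in the second-order expansion of `exp(isD) (1 - s² H / 2)`, up to
a factor `s²`. The truncation at `1` makes it integrable under second-moment assumptions only. -/
def remainderIntegrand (s D H : ℝ) : ℝ := (4 * D ^ 2 + |H|) * min 1 (s * |D|)

theorem remainderIntegrand_nonneg {s : ℝ} (hs : 0 ≤ s) (D H : ℝ) :
    0 ≤ remainderIntegrand s D H := by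
  unfold remainderIntegrand; positivity

theorem remainderIntegrand_le (s D H : ℝ) : remainderIntegrand s D H ≤ 4 * D ^ 2 + |H| :=
  mul_le_of_le_one_right (by positivity) (min_le_left _ _)

theorem monotone_remainderIntegrand (D H : ℝ) : Monotone fun s => remainderIntegrand s D H :=
  fun s t hst => by simp only [remainderIntegrand]; gcongr

theorem tendsto_remainderIntegrand (D H : ℝ) :
    Tendsto (fun s => remainderIntegrand s D H) (𝓝 0) (𝓝 0) := by
  have hcont : Continuous fun s => remainderIntegrand s D H := by
    unfold remainderIntegrand; fun_prop
  have := hcont.tendsto 0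
  rwa [remainderIntegrand, zero_mul, min_eq_right zero_le_one, mul_zero] at this

theorem norm_cexp_mul_sub_le {s : ℝ} (hs : 0 ≤ s) (D H : ℝ) :
    ‖Complex.exp ((s * D : ℝ) * Complex.I) * (1 - s ^ 2 / 2 * H : ℝ)
      - ((1 - s ^ 2 / 2 * (D ^ 2 + H) : ℝ) + (s * D : ℝ) * Complex.I)‖
      ≤ s ^ 2 * remainderIntegrand s D H := by
  have habs : |s * D| = s * |D| := by rw [abs_mul, abs_of_nonneg hs]
  have htaylor := norm_cexp_mul_I_sub_taylor_two_le (s * D)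
  have hone := norm_cexp_mul_I_sub_one_le (s * D)
  rw [habs] at htaylor hone
  set E := Complex.exp ((s * D : ℝ) * Complex.I)
  calc ‖E * (1 - s ^ 2 / 2 * H : ℝ)
        - ((1 - s ^ 2 / 2 * (D ^ 2 + H) : ℝ) + (s * D : ℝ) * Complex.I)‖
      = ‖(E - (1 + (s * D : ℝ) * Complex.I - (s * D : ℝ) ^ 2 / 2))
          - (E - 1) * (s ^ 2 / 2 * H : ℝ)‖ := by push_cast; ring_nf
    _ ≤ 4 * (s * D) ^ 2 * min 1 (s * |D|) + 2 * min 1 (s * |D|) * (s ^ 2 / 2 * |H|) := by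
        refine (norm_sub_le _ _).trans (add_le_add htaylor ?_)
        rw [norm_mul, Complex.norm_real, Real.norm_eq_abs, abs_mul, abs_of_nonneg (by positivity)]
        gcongr
    _ = s ^ 2 * remainderIntegrand s D H := by rw [remainderIntegrand]; ring

section Measure

variable {Y : Type*} [MeasurableSpace Y] {Q : Measure Y} {D H : Y → ℝ}

theorem integrable_remainderIntegrand (hD : MemLp D 2 Q) (hH : Integrable H Q) {s : ℝ}
    (hs : 0 ≤ s) : Integrable (fun y => remainderIntegrand s (D y) (H y)) Q := by
  refine ((hD.integrable_sq.const_mul 4).add hH.abs).mono' ?_ (ae_of_all _ fun y => ?_)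
  · have := hD.aemeasurable
    have := hH.aemeasurable
    unfold remainderIntegrand
    exact AEMeasurable.aestronglyMeasurable (by fun_prop)
  · rw [Real.norm_of_nonneg (remainderIntegrand_nonneg hs _ _)]
    exact remainderIntegrand_le _ _ _

theorem tendsto_integral_remainderIntegrand (hD : MemLp D 2 Q) (hH : Integrable H Q) :
    Tendsto (fun s => ∫ y, remainderIntegrand s (D y) (H y) ∂Q) (𝓝[>] 0) (𝓝 0) := by
  have hpos : ∀ᶠ s : ℝ in 𝓝[>] 0, 0 ≤ s := eventually_mem_nhdsWithin.mono fun s hs => le_of_lt hs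
  have := tendsto_integral_filter_of_dominated_convergence (μ := Q) (l := 𝓝[>] (0 : ℝ))
    (F := fun s y => remainderIntegrand s (D y) (H y)) (f := fun _ => 0)
    (fun y => 4 * D y ^ 2 + |H y|)
    (hpos.mono fun s hs => (integrable_remainderIntegrand hD hH hs).aestronglyMeasurable)
    (hpos.mono fun s hs => ae_of_all _ fun y => by
      rw [Real.norm_of_nonneg (remainderIntegrand_nonneg hs _ _)]
      exact remainderIntegrand_le _ _ _)
    ((hD.integrable_sq.const_mul 4).add hH.abs)
    (ae_of_all _ fun y => (tendsto_remainderIntegrand _ _).mono_left nhdsWithin_le_nhds)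
  rwa [integral_zero] at this

theorem integrable_cexp_mul {W : Y → ℂ} (hD : AEMeasurable D Q) (hW : Integrable W Q) :
    Integrable (fun y => Complex.exp ((D y : ℝ) * Complex.I) * W y) Q :=
  hW.bdd_mul (c := 1) (AEMeasurable.aestronglyMeasurable (by fun_prop))
    (ae_of_all _ fun y => (Complex.norm_exp_ofReal_mul_I _).le)

theorem norm_integral_cexp_mul_sub_le [IsProbabilityMeasure Q] (hD : MemLp D 2 Q)
    (hD0 : ∫ y, D y ∂Q = 0) (hH : Integrable H Q) {s : ℝ} (hs : 0 ≤ s) :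
    ‖∫ y, Complex.exp ((s * D y : ℝ) * Complex.I) * (1 - s ^ 2 / 2 * H y : ℝ) ∂Q
      - (1 - s ^ 2 / 2 * (∫ y, D y ^ 2 ∂Q + ∫ y, H y ∂Q) : ℝ)‖
      ≤ s ^ 2 * ∫ y, remainderIntegrand s (D y) (H y) ∂Q := by
  have hDH : Integrable (fun y => D y ^ 2 + H y) Q := hD.integrable_sq.add hH
  have hreal : Integrable (fun y => 1 - s ^ 2 / 2 * (D y ^ 2 + H y)) Q :=
    (integrable_const 1).sub (hDH.const_mul _)
  have hlin : Integrable (fun y => ((s * D y : ℝ) : ℂ) * Complex.I) Q :=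
    ((hD.integrable one_le_two).const_mul s).ofReal.mul_const _
  have hofReal : Integrable (fun y => ((1 - s ^ 2 / 2 * (D y ^ 2 + H y) : ℝ) : ℂ)) Q := hreal.ofReal
  have hpoly : Integrable (fun y => ((1 - s ^ 2 / 2 * (D y ^ 2 + H y) : ℝ) : ℂ)
      + (s * D y : ℝ) * Complex.I) Q := hofReal.add hlin
  have hexpansion : ((1 - s ^ 2 / 2 * (∫ y, D y ^ 2 ∂Q + ∫ y, H y ∂Q) : ℝ) : ℂ)
      = ∫ y, (((1 - s ^ 2 / 2 * (D y ^ 2 + H y) : ℝ) : ℂ) + (s * D y : ℝ) * Complex.I) ∂Q := by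
    rw [integral_add hofReal hlin, integral_mul_const, integral_complex_ofReal,
      integral_complex_ofReal, integral_const_mul, hD0,
      integral_sub (integrable_const 1) (hDH.const_mul _), integral_const_mul,
      integral_add hD.integrable_sq hH, integral_const, probReal_univ, one_smul, mul_zero,
      Complex.ofReal_zero, zero_mul, add_zero]
  have hexp : Integrable
      (fun y => Complex.exp ((s * D y : ℝ) * Complex.I) * (1 - s ^ 2 / 2 * H y : ℝ)) Q :=
    integrable_cexp_mul (hD.aemeasurable.const_mul s)
      ((integrable_const (1 : ℝ)).sub (hH.const_mul (s ^ 2 / 2))).ofReal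
  rw [hexpansion, ← integral_sub hexp hpoly, ← integral_const_mul]
  exact norm_integral_le_of_norm_le ((integrable_remainderIntegrand hD hH hs).const_mul _)
    (ae_of_all _ fun y => norm_cexp_mul_sub_le hs _ _)

end Measure

end SecondOrderExpansion

section MartingaleIncrements

variable {X : Type*} [MeasurableSpace X] {P : Kernel X X} {V : X → ℝ} {D : X → X → ℝ}

theorem measurable_integral_kernel [IsSFiniteKernel P] {F : X → X → ℝ}
    (hF : Measurable (Function.uncurry F)) : Measurable fun x => ∫ y, F x y ∂(P x) :=
  hF.stronglyMeasurable.integral_kernel_prod_right'.measurable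

/-- The increment functions `D` for which `∑ₖ D(Φₖ, Φₖ₊₁)` is a square-integrable martingale of the
chain with transition kernel `P`, with conditional variances of order `V`. The conditions are
imposed at every point `x`, which makes them independent of the initial distribution. -/
def martingaleIncrements (P : Kernel X X) [IsMarkovKernel P] (V : X → ℝ) :
    Submodule ℝ (X → X → ℝ) where
  carrier := {D | Measurable (Function.uncurry D) ∧ (∀ x, MemLp (D x) 2 (P x)) ∧
    (∀ x, ∫ y, D x y ∂(P x) = 0) ∧ (fun x => ∫ y, D x y ^ 2 ∂(P x)) ∈ weightedBounded V}
  zero_mem' := by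
    refine ⟨measurable_const, fun x => MemLp.zero, fun x => integral_zero _ _, ?_⟩
    simp only [Pi.zero_apply, ne_eq, OfNat.ofNat_ne_zero, not_false_eq_true, zero_pow,
      integral_zero]
    exact zero_mem (weightedBounded V)
  add_mem' := by
    rintro D D' ⟨hm, hLp, hint, hvar⟩ ⟨hm', hLp', hint', hvar'⟩
    refine ⟨hm.add hm', fun x => (hLp x).add (hLp' x), fun x => ?_, ?_⟩
    · simp only [Pi.add_apply]
      rw [integral_add ((hLp x).integrable one_le_two) ((hLp' x).integrable one_le_two), hint x,
        hint' x, add_zero]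
    · obtain ⟨C, hC, hbound⟩ := (add_mem hvar hvar').2
      refine ⟨measurable_integral_kernel ((hm.add hm').pow_const 2), 2 * C, by positivity,
        fun x => ?_⟩
      have hsq := (hLp x).integrable_sq
      have hsq' := (hLp' x).integrable_sq
      calc |∫ y, (D + D') x y ^ 2 ∂(P x)| ≤ ∫ y, 2 * (D x y ^ 2 + D' x y ^ 2) ∂(P x) := by
            rw [abs_of_nonneg (integral_nonneg fun y => sq_nonneg _)]
            exact integral_mono ((hLp x).add (hLp' x)).integrable_sq ((hsq.add hsq').const_mul 2)
              fun y => add_sq_le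
        _ = 2 * (∫ y, D x y ^ 2 ∂(P x) + ∫ y, D' x y ^ 2 ∂(P x)) := by
            rw [integral_const_mul, integral_add hsq hsq']
        _ ≤ 2 * C * V x := by
            have := (le_abs_self _).trans (hbound x)
            simp only [Pi.add_apply] at this
            linarith
  smul_mem' := by
    rintro c D ⟨hm, hLp, hint, hvar⟩
    refine ⟨hm.const_mul c, fun x => (hLp x).const_mul c, fun x => ?_, ?_⟩
    · simp only [Pi.smul_apply, smul_eq_mul]
      rw [integral_const_mul, hint x, mul_zero]
    · simp only [Pi.smul_apply, smul_eq_mul, mul_pow, integral_const_mul]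
      exact (weightedBounded V).smul_mem (c ^ 2) hvar

end MartingaleIncrements

section PartialSum

variable {X : Type*} [MeasurableSpace X] {P : Kernel X X} {μ : Measure X} {Pμ : Measure (ℕ → X)}

/-- The additive functional `∑ₖ D(Φₖ, Φₖ₊₁)`, `k < n`, of a trajectory. -/
def partialSum (D : X → X → ℝ) (n : ℕ) (ω : ℕ → X) : ℝ :=
  ∑ k ∈ Finset.range n, D (ω k) (ω (k + 1))

theorem measurable_partialSum {D : X → X → ℝ} (hD : Measurable (Function.uncurry D)) (n : ℕ) :
    Measurable (partialSum D n) :=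
  Finset.measurable_sum _ fun k _ => by fun_prop

namespace IsMarkovChainLaw

theorem integrable_comp_eval (h : IsMarkovChainLaw μ P Pμ) {j : ℕ} {E : Type*}
    [NormedAddCommGroup E] {u : X → E} (hu : Integrable u (kpow P j ∘ₘ μ)) :
    Integrable (fun ω => u (ω j)) Pμ :=
  (h.map_eval j ▸ hu).comp_measurable (measurable_pi_apply j)

theorem integral_comp_eval (h : IsMarkovChainLaw μ P Pμ) {j : ℕ} {u : X → ℝ} (hu : Measurable u) :
    ∫ ω, u (ω j) ∂Pμ = ∫ x, u x ∂(kpow P j ∘ₘ μ) := by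
  rw [← h.map_eval j, integral_map (measurable_pi_apply j).aemeasurable hu.aestronglyMeasurable]

variable [IsMarkovKernel P] {D : X → X → ℝ}

theorem integral_cexp_partialSum_succ (h : IsMarkovChainLaw μ P Pμ)
    (hD : Measurable (Function.uncurry D)) {W : X → ℝ} (hW : Measurable W) {n : ℕ}
    (hWint : Integrable W (kpow P (n + 1) ∘ₘ μ)) (s : ℝ) :
    ∫ ω, Complex.exp ((s * partialSum D (n + 1) ω : ℝ) * Complex.I) * W (ω (n + 1)) ∂Pμ
      = ∫ ω, Complex.exp ((s * partialSum D n ω : ℝ) * Complex.I)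
          * ∫ y, Complex.exp ((s * D (ω n) y : ℝ) * Complex.I) * W y ∂(P (ω n)) ∂Pμ := by
  let F : (Fin (n + 1) → X) × X → ℂ := fun z =>
    Complex.exp ((s * (∑ k : Fin n, D (z.1 k.castSucc) (z.1 k.succ)
      + D (z.1 (Fin.last n)) z.2) : ℝ) * Complex.I) * W z.2
  have hsum : ∀ ω, ∑ k : Fin n, D (past n ω k.castSucc) (past n ω k.succ) = partialSum D n ω :=
    fun ω => (Finset.sum_range fun k => D (ω k) (ω (k + 1))).symm
  have hF_succ : ∀ ω, F (past n ω, ω (n + 1))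
      = Complex.exp ((s * partialSum D (n + 1) ω : ℝ) * Complex.I) * W (ω (n + 1)) := fun ω => by
    rw [partialSum, Finset.sum_range_succ, ← partialSum, ← hsum]; rfl
  have hF_split : ∀ ω y, F (past n ω, y)
      = Complex.exp ((s * partialSum D n ω : ℝ) * Complex.I)
        * (Complex.exp ((s * D (ω n) y : ℝ) * Complex.I) * W y) := fun ω y => by
    simp only [F]
    rw [hsum, ← mul_assoc, ← Complex.exp_add, mul_add, Complex.ofReal_add, add_mul]
    rfl
  have hF : Measurable F := by
    have : ∀ i : Fin n, Measurable fun z : (Fin (n + 1) → X) × X =>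
        D (z.1 i.castSucc) (z.1 i.succ) := fun i => by fun_prop
    have : Measurable fun z : (Fin (n + 1) → X) × X => D (z.1 (Fin.last n)) z.2 := by
      fun_prop
    fun_prop
  have hint : Integrable (fun ω => F (past n ω, ω (n + 1))) Pμ := by
    simp_rw [hF_succ]
    exact integrable_cexp_mul ((measurable_partialSum hD (n + 1)).const_mul s).aemeasurable
      (h.integrable_comp_eval hWint).ofReal
  simp_rw [← hF_succ, h.integral_past_succ n hF.stronglyMeasurable hint, hF_split,
    integral_const_mul]

theorem norm_integral_cexp_partialSum_succ_sub_le (h : IsMarkovChainLaw μ P Pμ)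
    (hD : Measurable (Function.uncurry D)) {W B : X → ℝ} (hW : Measurable W) (hB : Measurable B)
    {n : ℕ} (hWn : Integrable W (kpow P n ∘ₘ μ)) (hWn' : Integrable W (kpow P (n + 1) ∘ₘ μ))
    (hBn : Integrable B (kpow P n ∘ₘ μ)) {s ρ : ℝ}
    (hWB : ∀ x, ‖∫ y, Complex.exp ((s * D x y : ℝ) * Complex.I) * W y ∂(P x) - (ρ * W x : ℝ)‖
      ≤ B x) :
    ‖∫ ω, Complex.exp ((s * partialSum D (n + 1) ω : ℝ) * Complex.I) * W (ω (n + 1)) ∂Pμ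
      - ρ * ∫ ω, Complex.exp ((s * partialSum D n ω : ℝ) * Complex.I) * W (ω n) ∂Pμ‖
      ≤ ∫ x, B x ∂(kpow P n ∘ₘ μ) := by
  have hS : AEMeasurable (fun ω => s * partialSum D n ω) Pμ :=
    ((measurable_partialSum hD n).const_mul s).aemeasurable
  set T : X → ℂ := fun x => ∫ y, Complex.exp ((s * D x y : ℝ) * Complex.I) * W y ∂(P x)
  have hTm : Measurable T := by
    have : Measurable fun z : X × X =>
        Complex.exp ((s * D z.1 z.2 : ℝ) * Complex.I) * W z.2 := by
      have : Measurable fun z : X × X => D z.1 z.2 := hD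
      fun_prop
    exact this.stronglyMeasurable.integral_kernel_prod_right'.measurable
  have hWω : Integrable (fun ω => (W (ω n) : ℂ)) Pμ := (h.integrable_comp_eval hWn).ofReal
  have hρW : Integrable (fun ω => ((ρ * W (ω n) : ℝ) : ℂ)) Pμ :=
    ((h.integrable_comp_eval hWn).const_mul ρ).ofReal
  have hBω := h.integrable_comp_eval hBn
  have hdiff : Integrable (fun ω => T (ω n) - (ρ * W (ω n) : ℝ)) Pμ :=
    hBω.mono' (by have := hW; fun_prop) (ae_of_all _ fun ω => hWB _)
  have hTω : Integrable (fun ω => T (ω n)) Pμ := by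
    simpa only [Pi.add_def, sub_add_cancel] using hdiff.add hρW
  rw [h.integral_cexp_partialSum_succ hD hW hWn', ← integral_const_mul, ← h.integral_comp_eval hB]
  change ‖∫ ω, Complex.exp ((s * partialSum D n ω : ℝ) * Complex.I) * T (ω n) ∂Pμ - _‖ ≤ _
  rw [← integral_sub (integrable_cexp_mul hS hTω) ((integrable_cexp_mul hS hWω).const_mul _)]
  refine norm_integral_le_of_norm_le hBω (ae_of_all _ fun ω => ?_)
  calc ‖Complex.exp ((s * partialSum D n ω : ℝ) * Complex.I) * T (ω n)
        - ρ * (Complex.exp ((s * partialSum D n ω : ℝ) * Complex.I) * W (ω n))‖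
      = ‖Complex.exp ((s * partialSum D n ω : ℝ) * Complex.I)
          * (T (ω n) - (ρ * W (ω n) : ℝ))‖ := by rw [mul_sub, Complex.ofReal_mul ρ, mul_left_comm]
    _ = ‖T (ω n) - (ρ * W (ω n) : ℝ)‖ := by
        rw [norm_mul, Complex.norm_exp_ofReal_mul_I, one_mul]
    _ ≤ B (ω n) := hWB (ω n)

end IsMarkovChainLaw

end PartialSum

section ScalarCLT

variable {X : Type*} [MeasurableSpace X] {P : Kernel X X} {V : X → ℝ} {l b : ℝ} {π μ : Measure X}
  {Pμ : Measure (ℕ → X)} {D : X → X → ℝ} {H : X → ℝ}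

/-- The expected remainder, up to a factor `s²`, in the second-order expansion of
`exp(isD) (1 - s² H / 2)` under one transition from `x`. -/
def remainder (P : Kernel X X) (D : X → X → ℝ) (H : X → ℝ) (s : ℝ) (x : X) : ℝ :=
  ∫ y, remainderIntegrand s (D x y) (H y) ∂(P x)

/-- The characteristic function at `s` of the partial sum up to time `n`, weighted by the corrector
`1 - s² H(Φₙ) / 2`. -/
def correctedCharFun (Pμ : Measure (ℕ → X)) (D : X → X → ℝ) (H : X → ℝ) (s : ℝ) (n : ℕ) : ℂ :=
  ∫ ω, Complex.exp ((s * partialSum D n ω : ℝ) * Complex.I) * (1 - s ^ 2 / 2 * H (ω n) : ℝ) ∂Pμ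

theorem remainder_nonneg {s : ℝ} (hs : 0 ≤ s) (x : X) : 0 ≤ remainder P D H s x :=
  integral_nonneg fun _ => remainderIntegrand_nonneg hs _ _

theorem norm_sub_pow_mul_le_sum {c : ℕ → ℂ} {ρ : ℂ} (hρ : ‖ρ‖ ≤ 1) {r : ℕ → ℝ}
    (hc : ∀ j, ‖c (j + 1) - ρ * c j‖ ≤ r j) (n : ℕ) :
    ‖c n - ρ ^ n * c 0‖ ≤ ∑ j ∈ Finset.range n, r j := by
  induction n with
  | zero => simp
  | succ n ih =>
    calc ‖c (n + 1) - ρ ^ (n + 1) * c 0‖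
        = ‖ρ * (c n - ρ ^ n * c 0) + (c (n + 1) - ρ * c n)‖ := by ring_nf
      _ ≤ ‖ρ‖ * ‖c n - ρ ^ n * c 0‖ + ‖c (n + 1) - ρ * c n‖ := by
          rw [← norm_mul]; exact norm_add_le _ _
      _ ≤ ∑ j ∈ Finset.range (n + 1), r j := by
          rw [Finset.sum_range_succ]
          exact add_le_add ((mul_le_of_le_one_left (norm_nonneg _) hρ).trans ih) (hc n)

namespace GeometricDrift

variable [IsMarkovKernel P]

theorem measurable_remainder (hD : D ∈ martingaleIncrements P V) (hH : H ∈ weightedBounded V)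
    (s : ℝ) : Measurable (remainder P D H s) := by
  have := hD.1
  have := hH.1
  refine measurable_integral_kernel (F := fun x y => remainderIntegrand s (D x y) (H y)) ?_
  unfold remainderIntegrand
  fun_prop

theorem exists_remainder_le (h : GeometricDrift P V l b) (hD : D ∈ martingaleIncrements P V)
    (hH : H ∈ weightedBounded V) :
    ∃ C, 0 ≤ C ∧ ∀ s, 0 ≤ s → ∀ x, remainder P D H s x ≤ C * V x := by
  obtain ⟨-, hLp, -, hvar⟩ := hD
  have habs : (fun x => |H x|) ∈ weightedBounded V :=
    ⟨hH.1.abs, hH.2.imp fun C hC => ⟨hC.1, fun x => (abs_abs (H x)).trans_le (hC.2 x)⟩⟩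
  obtain ⟨-, C, hC, hbound⟩ := add_mem ((weightedBounded V).smul_mem 4 hvar)
    (h.transition ⟨_, habs⟩).2
  refine ⟨C, hC, fun s hs x => le_trans ?_ ((le_abs_self _).trans (hbound x))⟩
  have hHx := (h.integrable_of_mem hH x).abs
  calc remainder P D H s x ≤ ∫ y, (4 * D x y ^ 2 + |H y|) ∂(P x) :=
        integral_mono (integrable_remainderIntegrand (hLp x) (h.integrable_of_mem hH x) hs)
          (((hLp x).integrable_sq.const_mul 4).add hHx) fun _ => remainderIntegrand_le _ _ _
    _ = 4 * ∫ y, D x y ^ 2 ∂(P x) + ∫ y, |H y| ∂(P x) := by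
        rw [integral_add ((hLp x).integrable_sq.const_mul 4) hHx, integral_const_mul]

theorem monotoneOn_remainder (h : GeometricDrift P V l b) (hD : D ∈ martingaleIncrements P V)
    (hH : H ∈ weightedBounded V) (x : X) : MonotoneOn (remainder P D H · x) (Set.Ici 0) :=
  fun _ hs _ ht hst => integral_mono
    (integrable_remainderIntegrand (hD.2.1 x) (h.integrable_of_mem hH x) hs)
    (integrable_remainderIntegrand (hD.2.1 x) (h.integrable_of_mem hH x) ht)
    fun _ => monotone_remainderIntegrand _ _ hst

theorem tendsto_average_remainder (h : GeometricDrift P V l b) [IsProbabilityMeasure π]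
    [IsProbabilityMeasure μ] (hP : IsVErgodic P V π) (hπ : Integrable V π) (hμ : Integrable V μ)
    (hD : D ∈ martingaleIncrements P V) (hH : H ∈ weightedBounded V) {s : ℕ → ℝ}
    (hs0 : ∀ n, 0 ≤ s n) (hs : Tendsto s atTop (𝓝 0)) :
    Tendsto (fun n : ℕ => (n : ℝ)⁻¹ *
      ∑ j ∈ Finset.range n, ∫ x, remainder P D H (s n) x ∂(kpow P j ∘ₘ μ)) atTop (𝓝 0) := by
  obtain ⟨C, hC, hle⟩ := h.exists_remainder_le hD hH
  exact h.tendsto_average_integral_kpow_comp_measure_zero hP hπ hμ hC (measurable_remainder hD hH)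
    (fun _ ht => remainder_nonneg ht) hle (h.monotoneOn_remainder hD hH)
    (fun x => tendsto_integral_remainderIntegrand (hD.2.1 x) (h.integrable_of_mem hH x)) hs0 hs

/- The corrector `1 - s² H / 2` turns the conditional variance into its mean `v`: with `H` solving
`σ² - v ≈ H - P H`, one transition multiplies the corrected characteristic function by the constant
`1 - s² v / 2`, up to a small error. -/
theorem norm_integral_cexp_mul_corrector_sub_le (h : GeometricDrift P V l b)
    (hD : D ∈ martingaleIncrements P V) (hH : H ∈ weightedBounded V) {C v ε s : ℝ}
    (hHC : ∀ x, |H x| ≤ C * V x) (hv : 0 ≤ v) {x : X}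
    (hvar : |∫ y, D x y ^ 2 ∂(P x) - v - (H x - ∫ y, H y ∂(P x))| ≤ ε * V x) (hs : 0 ≤ s) :
    ‖∫ y, Complex.exp ((s * D x y : ℝ) * Complex.I) * (1 - s ^ 2 / 2 * H y : ℝ) ∂(P x)
      - ((1 - s ^ 2 * v / 2) * (1 - s ^ 2 / 2 * H x) : ℝ)‖
      ≤ s ^ 2 * ((ε + s ^ 2 * v * C) * V x + remainder P D H s x) := by
  have hexp := norm_integral_cexp_mul_sub_le (hD.2.1 x) (hD.2.2.1 x) (h.integrable_of_mem hH x) hs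
  set σ := ∫ y, D x y ^ 2 ∂(P x)
  set PH := ∫ y, H y ∂(P x)
  have hpoly : |(1 - s ^ 2 / 2 * (σ + PH)) - (1 - s ^ 2 * v / 2) * (1 - s ^ 2 / 2 * H x)|
      ≤ s ^ 2 * ((ε + s ^ 2 * v * C) * V x) := by
    have hcross : |s ^ 2 * v * H x| ≤ s ^ 2 * v * (C * V x) := by
      rw [abs_mul, abs_of_nonneg (by positivity : 0 ≤ s ^ 2 * v)]
      exact mul_le_mul_of_nonneg_left (hHC x) (by positivity)
    calc |(1 - s ^ 2 / 2 * (σ + PH)) - (1 - s ^ 2 * v / 2) * (1 - s ^ 2 / 2 * H x)|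
        = |-(s ^ 2 / 2 * ((σ - v - (H x - PH)) + s ^ 2 * v * H x / 2))| := by ring_nf
      _ = s ^ 2 / 2 * |(σ - v - (H x - PH)) + s ^ 2 * v * H x / 2| := by
          rw [abs_neg, abs_mul, abs_of_nonneg (by positivity)]
      _ ≤ s ^ 2 / 2 * (2 * ((ε + s ^ 2 * v * C) * V x)) := by
          refine mul_le_mul_of_nonneg_left ((abs_add_le _ _).trans ?_) (by positivity)
          rw [abs_div, abs_two]
          have := (abs_nonneg _).trans hvar
          have := (abs_nonneg _).trans hcross
          linarith
      _ = s ^ 2 * ((ε + s ^ 2 * v * C) * V x) := by ring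
  rw [← Real.norm_eq_abs, ← Complex.norm_real, Complex.ofReal_sub] at hpoly
  refine (norm_sub_le_norm_sub_add_norm_sub _ _ _).trans ((add_le_add hexp hpoly).trans_eq ?_)
  rw [remainder]; ring

end GeometricDrift

namespace IsMarkovChainLaw

variable [IsMarkovKernel P] [IsProbabilityMeasure μ]

theorem norm_integral_cexp_partialSum_sub_correctedCharFun_le (hch : IsMarkovChainLaw μ P Pμ)
    (h : GeometricDrift P V l b) (hμ : Integrable V μ) (hD : Measurable (Function.uncurry D))
    (hH : H ∈ weightedBounded V) {C : ℝ} (hC : 0 ≤ C) (hHC : ∀ x, |H x| ≤ C * V x) (s : ℝ) (n : ℕ) :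
    ‖∫ ω, Complex.exp ((s * partialSum D n ω : ℝ) * Complex.I) ∂Pμ
      - correctedCharFun Pμ D H s n‖ ≤ s ^ 2 / 2 * (C * (∫ x, V x ∂μ + b / (1 - l))) := by
  have := hch.1
  have hS : AEMeasurable (fun ω => s * partialSum D n ω) Pμ :=
    ((measurable_partialSum hD n).const_mul s).aemeasurable
  have hVω := h.integrable_kpow_comp_measure hμ n
  have hHω : Integrable (fun ω => H (ω n)) Pμ :=
    hch.integrable_comp_eval (integrable_of_mem_weightedBounded hVω hH)
  have hone : Integrable (fun ω => Complex.exp ((s * partialSum D n ω : ℝ) * Complex.I)) Pμ := by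
    simpa only [mul_one] using integrable_cexp_mul hS (integrable_const (1 : ℂ))
  have hcorr : Integrable (fun ω => Complex.exp ((s * partialSum D n ω : ℝ) * Complex.I)
      * (1 - s ^ 2 / 2 * H (ω n) : ℝ)) Pμ :=
    integrable_cexp_mul hS ((integrable_const (1 : ℝ)).sub (hHω.const_mul _)).ofReal
  rw [correctedCharFun, ← integral_sub hone hcorr]
  calc _ ≤ ∫ ω, s ^ 2 / 2 * (C * V (ω n)) ∂Pμ := by
        refine norm_integral_le_of_norm_le
          (((hch.integrable_comp_eval hVω).const_mul C).const_mul _) (ae_of_all _ fun ω => ?_)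
        rw [← mul_one_sub, norm_mul, Complex.norm_exp_ofReal_mul_I, one_mul, ← Complex.ofReal_one,
          ← Complex.ofReal_sub, sub_sub_cancel, Complex.norm_real, Real.norm_eq_abs, abs_mul,
          abs_of_nonneg (by positivity)]
        exact mul_le_mul_of_nonneg_left (hHC _) (by positivity)
    _ ≤ s ^ 2 / 2 * (C * (∫ x, V x ∂μ + b / (1 - l))) := by
        rw [integral_const_mul, integral_const_mul, hch.integral_comp_eval h.measurable]
        have := h.integral_kpow_comp_measure_le hμ n
        gcongr

theorem norm_correctedCharFun_succ_sub_le (hch : IsMarkovChainLaw μ P Pμ)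
    (h : GeometricDrift P V l b) (hμ : Integrable V μ) (hD : D ∈ martingaleIncrements P V)
    (hH : H ∈ weightedBounded V) {C v ε s : ℝ} (hC : 0 ≤ C) (hHC : ∀ x, |H x| ≤ C * V x)
    (hv : 0 ≤ v) (hε : 0 ≤ ε)
    (hvar : ∀ x, |∫ y, D x y ^ 2 ∂(P x) - v - (H x - ∫ y, H y ∂(P x))| ≤ ε * V x)
    (hs : 0 ≤ s) (n : ℕ) :
    ‖correctedCharFun Pμ D H s (n + 1)
      - ((1 - s ^ 2 * v / 2 : ℝ) : ℂ) * correctedCharFun Pμ D H s n‖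
      ≤ s ^ 2 * ((ε + s ^ 2 * v * C) * (∫ x, V x ∂μ + b / (1 - l))
        + ∫ x, remainder P D H s x ∂(kpow P n ∘ₘ μ)) := by
  have hint : ∀ j {u : X → ℝ}, u ∈ weightedBounded V → Integrable u (kpow P j ∘ₘ μ) := fun j _ =>
    integrable_of_mem_weightedBounded (h.integrable_kpow_comp_measure hμ j)
  have hW : (fun x => 1 - s ^ 2 / 2 * H x) ∈ weightedBounded V :=
    sub_mem (h.const_mem 1) ((weightedBounded V).smul_mem (s ^ 2 / 2) hH)
  obtain ⟨CR, hCR, hR⟩ := h.exists_remainder_le hD hH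
  have hRn : Integrable (remainder P D H s) (kpow P n ∘ₘ μ) :=
    hint n ⟨GeometricDrift.measurable_remainder hD hH s, CR, hCR, fun x => by
      rw [abs_of_nonneg (remainder_nonneg hs x)]; exact hR s hs x⟩
  have hVn := (hint n h.self_mem).const_mul (ε + s ^ 2 * v * C)
  refine (hch.norm_integral_cexp_partialSum_succ_sub_le hD.1 hW.1 (((h.measurable.const_mul _).add
    (GeometricDrift.measurable_remainder hD hH s)).const_mul _) (hint n hW) (hint (n + 1) hW)
    ((hVn.add hRn).const_mul _) fun x =>
      h.norm_integral_cexp_mul_corrector_sub_le hD hH hHC hv (hvar x) hs).trans ?_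
  simp only [Pi.add_apply]
  rw [integral_const_mul, integral_add hVn hRn, integral_const_mul]
  have := h.integral_kpow_comp_measure_le hμ n
  gcongr

theorem norm_integral_cexp_partialSum_sub_pow_le (hch : IsMarkovChainLaw μ P Pμ)
    (h : GeometricDrift P V l b) (hμ : Integrable V μ) (hD : D ∈ martingaleIncrements P V)
    (hH : H ∈ weightedBounded V) {C v ε s : ℝ} (hC : 0 ≤ C) (hHC : ∀ x, |H x| ≤ C * V x)
    (hv : 0 ≤ v) (hε : 0 ≤ ε)
    (hvar : ∀ x, |∫ y, D x y ^ 2 ∂(P x) - v - (H x - ∫ y, H y ∂(P x))| ≤ ε * V x)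
    (hs : 0 ≤ s) (hsv : s ^ 2 * v ≤ 4) (n : ℕ) :
    ‖∫ ω, Complex.exp ((s * partialSum D n ω : ℝ) * Complex.I) ∂Pμ
      - ((1 - s ^ 2 * v / 2 : ℝ) : ℂ) ^ n‖
      ≤ s ^ 2 * (n * (ε + s ^ 2 * v * C) + C) * (∫ x, V x ∂μ + b / (1 - l))
        + s ^ 2 * ∑ j ∈ Finset.range n, ∫ x, remainder P D H s x ∂(kpow P j ∘ₘ μ) := by
  have := hch.1
  have hρ : ‖((1 - s ^ 2 * v / 2 : ℝ) : ℂ)‖ ≤ 1 := by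
    rw [Complex.norm_real, Real.norm_eq_abs, abs_le]
    have : 0 ≤ s ^ 2 * v := by positivity
    constructor <;> linarith
  have hrec := norm_sub_pow_mul_le_sum hρ
    (hch.norm_correctedCharFun_succ_sub_le h hμ hD hH hC hHC hv hε hvar hs) n
  have hlast := hch.norm_integral_cexp_partialSum_sub_correctedCharFun_le h hμ hD.1 hH hC hHC s n
  have hinit := hch.norm_integral_cexp_partialSum_sub_correctedCharFun_le h hμ hD.1 hH hC hHC s 0
  simp only [partialSum, Finset.range_zero, Finset.sum_empty, mul_zero, Complex.ofReal_zero,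
    zero_mul, Complex.exp_zero, integral_const, probReal_univ, one_smul] at hinit
  rw [← Finset.mul_sum, Finset.sum_add_distrib, Finset.sum_const, Finset.card_range,
    nsmul_eq_mul] at hrec
  set ρ : ℂ := ((1 - s ^ 2 * v / 2 : ℝ) : ℂ)
  set χ := ∫ ω, Complex.exp ((s * partialSum D n ω : ℝ) * Complex.I) ∂Pμ
  set c := correctedCharFun Pμ D H s
  calc ‖χ - ρ ^ n‖ = ‖(χ - c n) + (c n - ρ ^ n * c 0) - ρ ^ n * (1 - c 0)‖ := by ring_nf
    _ ≤ ‖χ - c n‖ + ‖c n - ρ ^ n * c 0‖ + ‖1 - c 0‖ := by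
        refine (norm_sub_le _ _).trans (add_le_add (norm_add_le _ _) ?_)
        rw [norm_mul, norm_pow]
        exact mul_le_of_le_one_left (norm_nonneg _) (pow_le_one₀ (norm_nonneg _) hρ)
    _ ≤ _ := (add_le_add (add_le_add hlast hrec) hinit).trans_eq (by ring)

/- The multiple `a / (M + 1)` of `V` in the approximate Poisson equation contributes at most
`a M / (M + 1) < a` to the distance, and the other error terms vanish as `n → ∞`. -/
theorem eventually_norm_integral_cexp_partialSum_sub_pow_lt (hch : IsMarkovChainLaw μ P Pμ)
    (h : GeometricDrift P V l b) [IsProbabilityMeasure π] (hP : IsVErgodic P V π)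
    (hπ : Integrable V π) (hμ : Integrable V μ) (hD : D ∈ martingaleIncrements P V) {a : ℝ}
    (ha : 0 < a) :
    ∀ᶠ n : ℕ in atTop, ‖∫ ω, Complex.exp (((√n)⁻¹ * partialSum D n ω : ℝ) * Complex.I) ∂Pμ
      - ((1 - (√n)⁻¹ ^ 2 * (∫ x, ∫ y, D x y ^ 2 ∂(P x) ∂π) / 2 : ℝ) : ℂ) ^ n‖ < a := by
  have hσ := hD.2.2.2
  set v := ∫ x, ∫ y, D x y ^ 2 ∂(P x) ∂π
  have hv : 0 ≤ v := integral_nonneg fun x => integral_nonneg fun y => sq_nonneg _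
  set M := ∫ x, V x ∂μ + b / (1 - l) with hM_def
  have hM : 0 ≤ M := add_nonneg (integral_nonneg h.nonneg)
    (div_nonneg h.const_nonneg (sub_nonneg.2 h.rate_lt_one.le))
  have hmean : ∫ x, (∫ y, D x y ^ 2 ∂(P x) - v) ∂π = 0 := by
    rw [integral_sub (integrable_of_mem_weightedBounded hπ hσ) (integrable_const v),
      integral_const, probReal_univ, one_smul, sub_self]
  obtain ⟨H, hH, hvar⟩ :=
    hP _ (sub_mem hσ (h.const_mem v)) hmean (a / (M + 1)) (by positivity)
  obtain ⟨C, hC, hHC⟩ := hH.2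
  have hsqrt : Tendsto (fun n : ℕ => (√n)⁻¹) atTop (𝓝 0) :=
    (Real.tendsto_sqrt_atTop.comp tendsto_natCast_atTop_atTop).inv_tendsto_atTop
  have hinv : Tendsto (fun n : ℕ => (n : ℝ)⁻¹) atTop (𝓝 0) := tendsto_inv_atTop_nhds_zero_nat
  have hrem := h.tendsto_average_remainder hP hπ hμ hD hH (fun n => by positivity) hsqrt
  have hbound := (((hinv.mul_const (v * C + C)).const_add (a / (M + 1))).mul_const M).add hrem
  rw [zero_mul, add_zero, add_zero] at hbound
  have hlt : a / (M + 1) * M < a := by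
    rw [div_mul_eq_mul_div, div_lt_iff₀ (by positivity)]
    nlinarith
  filter_upwards [hbound.eventually (gt_mem_nhds hlt), eventually_gt_atTop 0,
    tendsto_natCast_atTop_atTop.eventually_ge_atTop v] with n hn hn0 hnv
  have hn0 : (0 : ℝ) < n := Nat.cast_pos.2 hn0
  have hsq : (√(n : ℝ))⁻¹ ^ 2 = (n : ℝ)⁻¹ := by rw [inv_pow, Real.sq_sqrt hn0.le]
  have hnv4 : (√(n : ℝ))⁻¹ ^ 2 * v ≤ 4 := by
    rw [hsq, inv_mul_le_iff₀ hn0]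
    linarith
  have hcancel : (n : ℝ)⁻¹ * n = 1 := inv_mul_cancel₀ hn0.ne'
  refine lt_of_le_of_lt ((hch.norm_integral_cexp_partialSum_sub_pow_le h hμ hD hH hC hHC hv
    (by positivity) hvar (by positivity) hnv4 n).trans_eq ?_) hn
  rw [hsq, ← hM_def]
  linear_combination (a / (M + 1) + (n : ℝ)⁻¹ * v * C) * M * hcancel

theorem tendsto_integral_cexp_partialSum (hch : IsMarkovChainLaw μ P Pμ)
    (h : GeometricDrift P V l b) [IsProbabilityMeasure π] (hP : IsVErgodic P V π)
    (hπ : Integrable V π) (hμ : Integrable V μ) (hD : D ∈ martingaleIncrements P V) :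
    Tendsto (fun n : ℕ =>
        ∫ ω, Complex.exp (((√n)⁻¹ * partialSum D n ω : ℝ) * Complex.I) ∂Pμ) atTop
      (𝓝 (Complex.exp (-(∫ x, ∫ y, D x y ^ 2 ∂(P x) ∂π : ℝ) / 2))) := by
  set v := ∫ x, ∫ y, D x y ^ 2 ∂(P x) ∂π
  have hpow : Tendsto (fun n : ℕ => ((1 - (√n)⁻¹ ^ 2 * v / 2 : ℝ) : ℂ) ^ n) atTop
      (𝓝 (Complex.exp (-v / 2))) := by
    refine (Complex.tendsto_one_add_div_pow_exp (-v / 2)).congr fun n => ?_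
    rw [inv_pow, Real.sq_sqrt n.cast_nonneg]
    push_cast
    ring
  refine tendsto_of_tendsto_of_dist hpow (tendsto_order.2 ⟨fun a ha => .of_forall fun n =>
    ha.trans_le dist_nonneg, fun a ha => ?_⟩)
  filter_upwards [hch.eventually_norm_integral_cexp_partialSum_sub_pow_lt h hP hπ hμ hD ha]
    with n hn
  rwa [dist_comm, dist_eq_norm]

end IsMarkovChainLaw

end ScalarCLT

section CramerWold

variable {ι κ Ω Ω' : Type*} [Fintype ι] [Fintype κ] [MeasurableSpace Ω] [MeasurableSpace Ω']
  {μ : Measure Ω} [IsProbabilityMeasure μ] {ν : Measure Ω'} [IsProbabilityMeasure ν]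

theorem charFun_map_toLp (μ : Measure Ω) {Y : Ω → ι → ℝ} (hY : AEMeasurable Y μ)
    (t : EuclideanSpace ℝ ι) :
    charFun (μ.map fun ω => (WithLp.toLp 2 (Y ω) : EuclideanSpace ℝ ι)) t
      = ∫ ω, Complex.exp ((t.ofLp ⬝ᵥ Y ω : ℝ) * Complex.I) ∂μ := by
  rw [charFun_apply, integral_map (by fun_prop) (by fun_prop)]
  simp only [EuclideanSpace.inner_eq_star_dotProduct, star_trivial]

theorem tendstoInDistribution_of_tendsto_integral_cexp_dotProduct {Y : ℕ → Ω → ι → ℝ}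
    {Z : Ω' → ι → ℝ} (hY : ∀ n, AEMeasurable (Y n) μ) (hZ : AEMeasurable Z ν)
    (h : ∀ t : ι → ℝ, Tendsto (fun n => ∫ ω, Complex.exp ((t ⬝ᵥ Y n ω : ℝ) * Complex.I) ∂μ) atTop
      (𝓝 (∫ ω, Complex.exp ((t ⬝ᵥ Z ω : ℝ) * Complex.I) ∂ν))) :
    TendstoInDistribution Y atTop Z (fun _ => μ) ν := by
  have hEuclidean : TendstoInDistribution
      (fun n ω => (WithLp.toLp 2 (Y n ω) : EuclideanSpace ℝ ι)) atTop
      (fun ω => WithLp.toLp 2 (Z ω)) (fun _ => μ) ν := by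
    refine ⟨fun n => by fun_prop, by fun_prop,
      ProbabilityMeasure.tendsto_iff_tendsto_charFun.2 fun t => ?_⟩
    simp only [ProbabilityMeasure.coe_mk, charFun_map_toLp _ (hY _), charFun_map_toLp _ hZ]
    exact h t.ofLp
  exact hEuclidean.continuous_comp (PiLp.continuous_ofLp 2 _)

theorem integral_cexp_dotProduct_mulVec_pi_gaussianReal (C : Matrix ι κ ℝ) (t : ι → ℝ) :
    ∫ w, Complex.exp ((t ⬝ᵥ C.mulVec w : ℝ) * Complex.I) ∂(Measure.pi fun _ => gaussianReal 0 1)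
      = Complex.exp (-(t ⬝ᵥ (C * C.transpose).mulVec t : ℝ) / 2) := by
  have hnorm : ‖(WithLp.toLp 2 (C.vecMul t) : EuclideanSpace ℝ κ)‖ ^ 2
      = t ⬝ᵥ (C * C.transpose).mulVec t := by
    rw [EuclideanSpace.real_norm_sq_eq, Matrix.dotProduct_mulVec, ← Matrix.vecMul_vecMul,
      ← Matrix.dotProduct_mulVec, Matrix.mulVec_transpose, dotProduct]
    simp only [sq]
  have hstd := charFun_map_toLp (Measure.pi fun _ : κ => gaussianReal 0 1) aemeasurable_id
    (WithLp.toLp 2 (Matrix.vecMul t C))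
  simp only [id_eq, ← Matrix.dotProduct_mulVec] at hstd
  rw [← hstd, ← hnorm, Complex.ofReal_pow, ← charFun_stdGaussian, ← map_pi_eq_stdGaussian]

theorem tendsto_integral_of_tendstoInDistribution {E : Type*} [TopologicalSpace E]
    [MeasurableSpace E] [OpensMeasurableSpace E] {Y : ℕ → Ω → E} {Z : Ω' → E}
    (h : TendstoInDistribution Y atTop Z (fun _ => μ) ν) (φ : BoundedContinuousFunction E ℝ) :
    Tendsto (fun n => ∫ ω, φ (Y n ω) ∂μ) atTop (𝓝 (∫ ω, φ (Z ω) ∂ν)) := by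
  have hφ {ρ : Measure E} : AEStronglyMeasurable φ ρ := φ.continuous.aestronglyMeasurable
  have := ProbabilityMeasure.tendsto_iff_forall_integral_tendsto.1 h.tendsto φ
  simpa only [ProbabilityMeasure.coe_mk, integral_map (h.forall_aemeasurable _) hφ,
    integral_map h.aemeasurable_limit hφ] using this

end CramerWold

section VectorCLT

theorem partialSum_sum_smul {X ι : Type*} [Fintype ι] {E : ι → X → X → ℝ} (t : ι → ℝ)
    (n : ℕ) (ω : ℕ → X) :
    partialSum (∑ i, t i • E i) n ω = t ⬝ᵥ fun i => partialSum (E i) n ω := by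
  simp only [partialSum, dotProduct, Finset.mul_sum, Finset.sum_apply, Pi.smul_apply, smul_eq_mul]
  exact Finset.sum_comm

variable {X ι : Type*} [MeasurableSpace X] {P : Kernel X X} {V : X → ℝ} {D D' : X → X → ℝ}

/-- The matrix `∫ (∫ Eᵢ(x, y) Eⱼ(x, y) P(x, dy)) π(dx)`, the limiting covariance of the normalized
martingales `n^{-1/2} ∑ₖ Eᵢ(Φₖ, Φₖ₊₁)`. -/
def incrementCovariance (P : Kernel X X) (π : Measure X) (E : ι → X → X → ℝ) : Matrix ι ι ℝ :=
  Matrix.of fun i j => ∫ x, ∫ y, E i x y * E j x y ∂(P x) ∂π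

theorem integral_mul_mem_weightedBounded [IsMarkovKernel P] (hD : D ∈ martingaleIncrements P V)
    (hD' : D' ∈ martingaleIncrements P V) :
    (fun x => ∫ y, D x y * D' x y ∂(P x)) ∈ weightedBounded V := by
  have hpolarization : (fun x => ∫ y, D x y * D' x y ∂(P x))
      = (2⁻¹ : ℝ) • ((fun x => ∫ y, (D + D') x y ^ 2 ∂(P x)) - (fun x => ∫ y, D x y ^ 2 ∂(P x))
        - fun x => ∫ y, D' x y ^ 2 ∂(P x)) := funext fun x => by
    have hsq := (hD.2.1 x).integrable_sq
    have hsq' := (hD'.2.1 x).integrable_sq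
    have hadd : Integrable (fun y => (D + D') x y ^ 2) (P x) :=
      ((hD.2.1 x).add (hD'.2.1 x)).integrable_sq
    simp only [Pi.smul_apply, Pi.sub_apply, smul_eq_mul]
    rw [← integral_sub hadd hsq, ← integral_sub (by exact hadd.sub hsq) hsq', ← integral_const_mul]
    refine integral_congr_ae (ae_of_all _ fun y => ?_)
    simp only [Pi.add_apply]
    ring
  rw [hpolarization]
  exact Submodule.smul_mem _ _
    (sub_mem (sub_mem (add_mem hD hD').2.2.2 hD.2.2.2) hD'.2.2.2)

variable {E : ι → X → X → ℝ}

theorem integral_sum_smul_sq [Fintype ι] [IsMarkovKernel P] {π : Measure X}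
    (hπ : Integrable V π) (hE : ∀ i, E i ∈ martingaleIncrements P V) (t : ι → ℝ) :
    ∫ x, ∫ y, (∑ i, t i • E i) x y ^ 2 ∂(P x) ∂π
      = t ⬝ᵥ (incrementCovariance P π E).mulVec t := by
  have hint : ∀ x i j, Integrable (fun y => t i * t j * (E i x y * E j x y)) (P x) := fun x i j =>
    (((hE i).2.1 x).integrable_mul ((hE j).2.1 x)).const_mul _
  have hint' : ∀ i j, Integrable (fun x => t i * t j * ∫ y, E i x y * E j x y ∂(P x)) π :=
    fun i j => (integrable_of_mem_weightedBounded hπ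
      (integral_mul_mem_weightedBounded (hE i) (hE j))).const_mul _
  have hexpand : ∀ x y, (∑ i, t i • E i) x y ^ 2 = ∑ i, ∑ j, t i * t j * (E i x y * E j x y) :=
    fun x y => by
      simp only [Finset.sum_apply, Pi.smul_apply, smul_eq_mul, sq, Finset.sum_mul_sum]
      exact Finset.sum_congr rfl fun i _ => Finset.sum_congr rfl fun j _ => by ring
  have hinner : ∀ x, ∫ y, (∑ i, t i • E i) x y ^ 2 ∂(P x)
      = ∑ i, ∑ j, t i * t j * ∫ y, E i x y * E j x y ∂(P x) := fun x => by
    simp_rw [hexpand]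
    rw [integral_finsetSum _ fun i _ => integrable_finsetSum _ fun j _ => hint x i j]
    refine Finset.sum_congr rfl fun i _ => ?_
    rw [integral_finsetSum _ fun j _ => hint x i j]
    simp only [integral_const_mul]
  simp_rw [hinner]
  rw [integral_finsetSum _ fun i _ => integrable_finsetSum _ fun j _ => hint' i j]
  refine Finset.sum_congr rfl fun i _ => ?_
  rw [integral_finsetSum _ fun j _ => hint' i j, Matrix.mulVec, dotProduct, Finset.mul_sum]
  refine Finset.sum_congr rfl fun j _ => ?_
  rw [integral_const_mul, incrementCovariance, Matrix.of_apply]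
  ring

theorem IsMarkovChainLaw.tendstoInDistribution_partialSum {κ : Type*} [Finite ι]
    [Fintype κ] [IsMarkovKernel P] {l b : ℝ} {π μ : Measure X} [IsProbabilityMeasure π]
    [IsProbabilityMeasure μ] {Pμ : Measure (ℕ → X)} [IsProbabilityMeasure Pμ]
    (hch : IsMarkovChainLaw μ P Pμ) (h : GeometricDrift P V l b) (hP : IsVErgodic P V π)
    (hπ : Integrable V π) (hμ : Integrable V μ) (hE : ∀ i, E i ∈ martingaleIncrements P V)
    {C : Matrix ι κ ℝ} (hC : C * C.transpose = incrementCovariance P π E) :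
    TendstoInDistribution (fun (n : ℕ) ω i => (√n)⁻¹ * partialSum (E i) n ω) atTop C.mulVec
      (fun _ => Pμ) (Measure.pi fun _ => gaussianReal 0 1) := by
  have := Fintype.ofFinite ι
  refine tendstoInDistribution_of_tendsto_integral_cexp_dotProduct
    (fun n => (measurable_pi_lambda _ fun i =>
      (measurable_partialSum (hE i).1 n).const_mul _).aemeasurable)
    (Continuous.matrix_mulVec continuous_const continuous_id).aemeasurable fun t => ?_
  have hlim := hch.tendsto_integral_cexp_partialSum h hP hπ hμ
    (Submodule.sum_smul_mem (martingaleIncrements P V) t (t := Finset.univ)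
      fun i _ => hE i)
  rw [integral_sum_smul_sq hπ hE, ← hC] at hlim
  rw [integral_cexp_dotProduct_mulVec_pi_gaussianReal]
  refine hlim.congr fun n => ?_
  simp only [partialSum_sum_smul, ← smul_eq_mul (√(n : ℝ))⁻¹, ← dotProduct_smul]
  rfl

end VectorCLT

section PoissonEquation

variable {X : Type*} [MeasurableSpace X] {P : Kernel X X} {V u : X → ℝ}

/-- The increment `u(y) - (P u)(x)` of the martingale attached to the chain by a solution `u` of
Poisson's equation `u - P u = f - α`. -/
def poissonIncrement (P : Kernel X X) (u : X → ℝ) (x y : X) : ℝ :=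
  u y - ∫ z, u z ∂(P x)

theorem integral_poissonIncrement_sq {x : X} (hu : AEMeasurable u (P x)) :
    ∫ y, poissonIncrement P u x y ^ 2 ∂(P x) = Var[u; P x] :=
  (variance_eq_integral hu).symm

theorem GeometricDrift.memLp_two {l b : ℝ} (h : GeometricDrift P V l b) (hu : Measurable u)
    (hu2 : (fun x => u x ^ 2) ∈ weightedBounded V) (x : X) : MemLp u 2 (P x) :=
  (memLp_two_iff_integrable_sq hu.aestronglyMeasurable).2 (h.integrable_of_mem hu2 x)

variable [IsMarkovKernel P]

theorem integral_poissonIncrement {x : X} (hu : Integrable u (P x)) :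
    ∫ y, poissonIncrement P u x y ∂(P x) = 0 := by
  simp only [poissonIncrement]
  rw [integral_sub hu (integrable_const _), integral_const, probReal_univ, one_smul, sub_self]

theorem integral_poissonIncrement_mul {x : X} {D : X → ℝ} (hu : MemLp u 2 (P x))
    (hD : MemLp D 2 (P x)) (hmean : ∫ y, D y ∂(P x) = 0) :
    ∫ y, poissonIncrement P u x y * D y ∂(P x) = ∫ y, u y * D y ∂(P x) := by
  have huD : Integrable (fun y => u y * D y) (P x) := hu.integrable_mul hD
  simp only [poissonIncrement, sub_mul]
  rw [integral_sub huD ((hD.integrable one_le_two).const_mul _),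
    integral_const_mul, hmean, mul_zero, sub_zero]

theorem GeometricDrift.poissonIncrement_mem_martingaleIncrements {l b : ℝ}
    (h : GeometricDrift P V l b) (hu : Measurable u)
    (hu2 : (fun x => u x ^ 2) ∈ weightedBounded V) :
    poissonIncrement P u ∈ martingaleIncrements P V := by
  have huLp := h.memLp_two hu hu2
  have hmeas : Measurable (Function.uncurry (poissonIncrement P u)) :=
    (hu.comp measurable_snd).sub
      ((measurable_integral_kernel (F := fun _ => u) (hu.comp measurable_snd)).comp measurable_fst)
  obtain ⟨-, C, hC, hbound⟩ := (h.transition ⟨_, hu2⟩).2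
  refine ⟨hmeas, fun x => (huLp x).sub (memLp_const _),
    fun x => integral_poissonIncrement ((huLp x).integrable one_le_two),
    measurable_integral_kernel (hmeas.pow_const 2), C, hC, fun x => ?_⟩
  beta_reduce
  rw [integral_poissonIncrement_sq hu.aemeasurable, abs_of_nonneg (variance_nonneg _ _)]
  exact (variance_le_expectation_sq hu.aestronglyMeasurable).trans
    ((le_abs_self _).trans (hbound x))

theorem GeometricDrift.eq_incrementCovariance_cons_poissonIncrement {l b : ℝ} {d : ℕ}
    {π : Measure X} {D : Fin d → X → X → ℝ} {S : Matrix (Fin (d + 1)) (Fin (d + 1)) ℝ}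
    (h : GeometricDrift P V l b) (hu : Measurable u)
    (hu2 : (fun x => u x ^ 2) ∈ weightedBounded V) (hD : ∀ i, D i ∈ martingaleIncrements P V)
    (hS00 : S 0 0 = ∫ x, (∫ y, u y ^ 2 ∂(P x) - (∫ y, u y ∂(P x)) ^ 2) ∂π)
    (hS0i : ∀ i : Fin d, S 0 i.succ = ∫ x, ∫ y, u y * D i x y ∂(P x) ∂π)
    (hSi0 : ∀ i : Fin d, S i.succ 0 = ∫ x, ∫ y, u y * D i x y ∂(P x) ∂π)
    (hSij : ∀ i j : Fin d, S i.succ j.succ = ∫ x, ∫ y, D i x y * D j x y ∂(P x) ∂π) :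
    S = incrementCovariance P π (Fin.cons (poissonIncrement P u) D) := by
  have huLp := h.memLp_two hu hu2
  have hcross : ∀ i x, ∫ y, poissonIncrement P u x y * D i x y ∂(P x) = ∫ y, u y * D i x y ∂(P x) :=
    fun i x => integral_poissonIncrement_mul (huLp x) ((hD i).2.1 x) ((hD i).2.2.1 x)
  ext i j
  simp only [incrementCovariance, Matrix.of_apply]
  cases i using Fin.cases with
  | zero =>
    cases j using Fin.cases with
    | zero =>
      rw [hS00]
      refine integral_congr_ae (ae_of_all _ fun x => ?_)
      simp only [Fin.cons_zero, ← sq]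
      rw [integral_poissonIncrement_sq hu.aemeasurable, variance_eq_sub (huLp x)]
      rfl
    | succ j => simp only [Fin.cons_zero, Fin.cons_succ, hS0i, hcross]
  | succ i =>
    cases j using Fin.cases with
    | zero => simp only [Fin.cons_zero, Fin.cons_succ, hSi0, mul_comm (D i _ _), hcross]
    | succ j => simp only [Fin.cons_succ, hSij]

end PoissonEquation

section ControlVariate

theorem sum_eq_partialSum_poissonIncrement_add {X : Type*} [MeasurableSpace X] {P : Kernel X X}
    {u f : X → ℝ} {α : ℝ} (hPoisson : ∀ x, u x - ∫ y, u y ∂(P x) = f x - α) (n : ℕ) (ω : ℕ → X) :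
    ∑ j ∈ Finset.range n, f (ω j)
      = partialSum (poissonIncrement P u) n ω + (u (ω 0) - u (ω n)) + n * α := by
  have hα : (n : ℝ) * α = ∑ _j ∈ Finset.range n, α := by simp
  rw [partialSum, hα, ← Finset.sum_range_sub' (fun j => u (ω j)), ← Finset.sum_add_distrib,
    ← Finset.sum_add_distrib]
  refine Finset.sum_congr rfl fun j _ => ?_
  rw [poissonIncrement]
  linear_combination -hPoisson (ω j)

theorem sq_mem_weightedBounded_of_abs_le_mul_sqrt {X : Type*} [MeasurableSpace X]
    {V u : X → ℝ} (hV0 : ∀ x, 0 ≤ V x)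
    (hu : Measurable u) {c : ℝ} (huc : ∀ x, |u x| ≤ c * √(V x)) :
    (fun x => u x ^ 2) ∈ weightedBounded V := by
  refine ⟨hu.pow_const 2, c ^ 2, sq_nonneg c, fun x => ?_⟩
  calc |u x ^ 2| = |u x| ^ 2 := abs_pow _ _
    _ ≤ (c * √(V x)) ^ 2 := pow_le_pow_left₀ (abs_nonneg _) (huc x) 2
    _ = c ^ 2 * V x := by rw [mul_pow, Real.sq_sqrt (hV0 x)]

theorem mem_weightedBounded_of_sq_mem {X : Type*} [MeasurableSpace X] {V u : X → ℝ}
    (hV : ∀ x, 1 ≤ V x) (hu : Measurable u) (hu2 : (fun x => u x ^ 2) ∈ weightedBounded V) :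
    u ∈ weightedBounded V := by
  obtain ⟨-, C, hC, hbound⟩ := hu2
  refine ⟨hu, 1 + C, by positivity, fun x => ?_⟩
  have hsq : |u x| ^ 2 ≤ C * V x := by simpa only [abs_pow] using hbound x
  nlinarith [sq_nonneg (|u x| - 1), hV x, abs_nonneg (u x)]

namespace IsMarkovChainLaw

variable {X : Type*} [MeasurableSpace X] {P : Kernel X X} [IsMarkovKernel P] {V : X → ℝ} {l b : ℝ}
  {π μ : Measure X} [IsProbabilityMeasure μ] {Pμ : Measure (ℕ → X)}

theorem integral_abs_sub_le (hch : IsMarkovChainLaw μ P Pμ) (h : GeometricDrift P V l b)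
    (hμ : Integrable V μ) {u : X → ℝ} (hu : Measurable u) {C : ℝ} (hC : 0 ≤ C)
    (huC : ∀ x, |u x| ≤ C * V x) (m n : ℕ) :
    ∫ ω, |u (ω m) - u (ω n)| ∂Pμ ≤ 2 * (C * (∫ x, V x ∂μ + b / (1 - l))) := by
  have hint : ∀ j, Integrable (fun ω => u (ω j)) Pμ := fun j =>
    hch.integrable_comp_eval (integrable_of_mem_weightedBounded
      (h.integrable_kpow_comp_measure hμ j) ⟨hu, C, hC, huC⟩)
  have hbound : ∀ j, ∫ ω, |u (ω j)| ∂Pμ ≤ C * (∫ x, V x ∂μ + b / (1 - l)) := fun j => by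
    rw [hch.integral_comp_eval (u := fun x => |u x|) hu.abs]
    exact (le_abs_self _).trans
      (h.abs_integral_kpow_comp_measure_le hμ hC (fun x => (abs_abs _).trans_le (huC x)) j)
  calc ∫ ω, |u (ω m) - u (ω n)| ∂Pμ ≤ ∫ ω, (|u (ω m)| + |u (ω n)|) ∂Pμ :=
        integral_mono ((hint m).sub (hint n)).abs ((hint m).abs.add (hint n).abs)
          fun ω => abs_sub _ _
    _ = ∫ ω, |u (ω m)| ∂Pμ + ∫ ω, |u (ω n)| ∂Pμ := integral_add (hint m).abs (hint n).abs
    _ ≤ 2 * (C * (∫ x, V x ∂μ + b / (1 - l))) := by linarith [hbound m, hbound n]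

theorem tendstoInMeasure_inv_sqrt_mul_sub (hch : IsMarkovChainLaw μ P Pμ)
    (h : GeometricDrift P V l b) (hμ : Integrable V μ) {u : X → ℝ} (hu : u ∈ weightedBounded V) :
    TendstoInMeasure Pμ (fun (n : ℕ) ω => (√n)⁻¹ * (u (ω 0) - u (ω n))) atTop fun _ => 0 := by
  obtain ⟨hum, C, hC, huC⟩ := id hu
  have hint : ∀ j, Integrable (fun ω => u (ω j)) Pμ := fun j =>
    hch.integrable_comp_eval (integrable_of_mem_weightedBounded
      (h.integrable_kpow_comp_measure hμ j) hu)
  have hRint : ∀ n : ℕ, Integrable (fun ω => (√n)⁻¹ * (u (ω 0) - u (ω n))) Pμ := fun n =>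
    ((hint 0).sub (hint n)).const_mul _
  have hL1 : Tendsto (fun n : ℕ => ∫ ω, ‖(√n)⁻¹ * (u (ω 0) - u (ω n))‖ ∂Pμ) atTop (𝓝 0) := by
    have hinv : Tendsto (fun n : ℕ => (√(n : ℝ))⁻¹) atTop (𝓝 0) :=
      tendsto_inv_atTop_zero.comp (Real.tendsto_sqrt_atTop.comp tendsto_natCast_atTop_atTop)
    have hlim := hinv.mul_const (2 * (C * (∫ x, V x ∂μ + b / (1 - l))))
    rw [zero_mul] at hlim
    refine squeeze_zero (fun n => integral_nonneg fun ω => norm_nonneg _) (fun n => ?_) hlim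
    simp only [norm_mul, norm_inv, Real.norm_of_nonneg (Real.sqrt_nonneg _), integral_const_mul]
    exact mul_le_mul_of_nonneg_left (hch.integral_abs_sub_le h hμ hum hC huC 0 n) (by positivity)
  refine tendstoInMeasure_of_tendsto_eLpNorm one_ne_zero
    (fun n => (hRint n).aestronglyMeasurable)
    aestronglyMeasurable_const ?_
  have hofReal := ENNReal.tendsto_ofReal hL1
  rw [ENNReal.ofReal_zero] at hofReal
  refine hofReal.congr fun n => ?_
  rw [ofReal_integral_norm_eq_lintegral_enorm (hRint n), ← eLpNorm_one_eq_lintegral_enorm]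
  exact congrArg (eLpNorm · 1 Pμ) (sub_zero _).symm

theorem tendstoInDistribution_controlVariate {κ : Type*} [Fintype κ] {d : ℕ}
    [IsProbabilityMeasure π] [IsProbabilityMeasure Pμ] (hch : IsMarkovChainLaw μ P Pμ)
    (h : GeometricDrift P V l b) (hP : IsVErgodic P V π) (hπ : Integrable V π)
    (hμ : Integrable V μ) {D : Fin d → X → X → ℝ} (hD : ∀ i, D i ∈ martingaleIncrements P V)
    {u f : X → ℝ} {α : ℝ} (hu : Measurable u) (hu2 : (fun x => u x ^ 2) ∈ weightedBounded V)
    (hPoisson : ∀ x, u x - ∫ y, u y ∂(P x) = f x - α) {C : Matrix (Fin (d + 1)) κ ℝ}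
    (hC : C * C.transpose = incrementCovariance P π (Fin.cons (poissonIncrement P u) D)) :
    TendstoInDistribution
      (fun (n : ℕ) ω i =>
        (1 / (n : ℝ) * ∑ j ∈ Finset.range n, f (ω j) - α) * partialSum (D i) n ω) atTop
      (fun w i => C.mulVec w 0 * C.mulVec w i.succ) (fun _ => Pμ)
      (Measure.pi fun _ => gaussianReal 0 1) := by
  have hE : ∀ i, (Fin.cons (poissonIncrement P u) D : Fin (d + 1) → X → X → ℝ) i
      ∈ martingaleIncrements P V :=
    Fin.cases (h.poissonIncrement_mem_martingaleIncrements hu hu2) hD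
  have hproduct : Continuous fun (z : (Fin (d + 1) → ℝ) × ℝ) (i : Fin d) =>
      (z.1 0 + z.2) * z.1 i.succ := by fun_prop
  have hclt := (hch.tendstoInDistribution_partialSum h hP hπ hμ hE hC)
    |>.continuous_comp_prodMk_of_tendstoInMeasure_const hproduct
      (hch.tendstoInMeasure_inv_sqrt_mul_sub h hμ (mem_weightedBounded_of_sq_mem h.one_le hu hu2))
      (fun n => by fun_prop)
  refine hclt.congr (fun n => ae_of_all _ fun ω => funext fun i => ?_)
    (ae_of_all _ fun w => funext fun i => by rw [add_zero])
  simp only [Fin.cons_zero, Fin.cons_succ]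
  rcases n.eq_zero_or_pos with rfl | hn
  · simp [partialSum]
  have hn : (0 : ℝ) < n := Nat.cast_pos.2 hn
  have hsq : (√(n : ℝ))⁻¹ * (√(n : ℝ))⁻¹ = 1 / n := by
    rw [← mul_inv, Real.mul_self_sqrt hn.le, one_div]
  have hcancel : 1 / (n : ℝ) * n = 1 := one_div_mul_cancel hn.ne'
  rw [sum_eq_partialSum_poissonIncrement_add hPoisson]
  linear_combination (partialSum (poissonIncrement P u) n ω + (u (ω 0) - u (ω n)))
    * partialSum (D i) n ω * hsq - α * partialSum (D i) n ω * hcancel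

end IsMarkovChainLaw

end ControlVariate

section Score

variable {Y : Type*} [MeasurableSpace Y] {Q : Measure Y}

theorem integral_eq_one_of_isProbabilityMeasure_withDensity {q : Y → ℝ} (hq : Measurable q)
    (hq0 : ∀ y, 0 ≤ q y)
    (hQ : IsProbabilityMeasure (Q.withDensity fun y => ENNReal.ofReal (q y))) :
    ∫ y, q y ∂Q = 1 := by
  have hmass : ∫⁻ y, ENNReal.ofReal (q y) ∂Q = 1 := by
    rw [← setLIntegral_univ, ← withDensity_apply _ MeasurableSet.univ, measure_univ]
  rw [integral_eq_lintegral_of_nonneg_ae (ae_of_all _ hq0) hq.aestronglyMeasurable, hmass,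
    ENNReal.toReal_one]

theorem integral_eq_zero_of_tendsto_integral_diffQuotient [IsProbabilityMeasure Q]
    {q : ℝ → Y → ℝ} {D : Y → ℝ} (hq : ∀ᶠ t in 𝓝[≠] 0, ∫ y, q t y ∂Q = 1) (hD : Integrable D Q)
    (hlim : Tendsto (fun t => ∫ y, ((q t y - 1) / t - D y) ∂Q) (𝓝[≠] 0) (𝓝 0)) :
    ∫ y, D y ∂Q = 0 := by
  have hconst : ∀ᶠ t in 𝓝[≠] (0 : ℝ), -∫ y, D y ∂Q = ∫ y, ((q t y - 1) / t - D y) ∂Q := by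
    filter_upwards [hq] with t ht
    have hint : Integrable (q t) Q := not_imp_comm.1 integral_undef (by rw [ht]; exact one_ne_zero)
    have hint1 : Integrable (fun y => q t y - 1) Q := hint.sub (integrable_const 1)
    rw [integral_sub (hint1.div_const t) hD, integral_div,
      integral_sub hint (integrable_const 1), ht, integral_const, probReal_univ, one_smul, sub_self,
      zero_div, zero_sub]
  exact neg_eq_zero.1 (tendsto_nhds_unique (tendsto_const_nhds.congr' hconst) hlim)

end Score

section LintegralBounds

variable {Y : Type*} [MeasurableSpace Y] {Q : Measure Y}

theorem integrable_of_lintegral_ofReal_lt_top {u : Y → ℝ} (hu : Measurable u)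
    (hu0 : ∀ y, 0 ≤ u y) (h : ∫⁻ y, ENNReal.ofReal (u y) ∂Q < ⊤) : Integrable u Q :=
  (lintegral_ofReal_ne_top_iff_integrable hu.aestronglyMeasurable (ae_of_all _ hu0)).1 h.ne

theorem integral_le_of_lintegral_ofReal_le {u : Y → ℝ} (hu : Measurable u) (hu0 : ∀ y, 0 ≤ u y)
    {a : ℝ} (ha : 0 ≤ a) (h : ∫⁻ y, ENNReal.ofReal (u y) ∂Q ≤ ENNReal.ofReal a) :
    ∫ y, u y ∂Q ≤ a := by
  rw [integral_eq_lintegral_of_nonneg_ae (ae_of_all _ hu0) hu.aestronglyMeasurable]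
  exact ENNReal.toReal_le_of_le_ofReal ha h

theorem memLp_two_of_lintegral_ofReal_sq_le {u : Y → ℝ} (hu : Measurable u) {a : ℝ}
    (h : ∫⁻ y, ENNReal.ofReal (u y ^ 2) ∂Q ≤ ENNReal.ofReal a) : MemLp u 2 Q :=
  (memLp_two_iff_integrable_sq hu.aestronglyMeasurable).2
    (integrable_of_lintegral_ofReal_lt_top (hu.pow_const 2) (fun _ => sq_nonneg _)
      (h.trans_lt ENNReal.ofReal_lt_top))

variable {X : Type*} [MeasurableSpace X]

theorem mem_martingaleIncrements_of_lintegral_ofReal_sq_le {P : Kernel X X} [IsMarkovKernel P]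
    {V : X → ℝ} (hV : ∀ x, 0 ≤ V x) {D : X → X → ℝ} (hD : Measurable (Function.uncurry D))
    (hmean : ∀ x, ∫ y, D x y ∂(P x) = 0) {C : ℝ}
    (hsq : ∀ x, ∫⁻ y, ENNReal.ofReal (D x y ^ 2) ∂(P x) ≤ ENNReal.ofReal (C * V x)) :
    D ∈ martingaleIncrements P V := by
  have hDx : ∀ x, Measurable (D x) := fun x => hD.comp measurable_prodMk_left
  refine ⟨hD, fun x => memLp_two_of_lintegral_ofReal_sq_le (hDx x) (hsq x), hmean,
    measurable_integral_kernel (hD.pow_const 2), |C|, abs_nonneg C, fun x => ?_⟩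
  rw [abs_of_nonneg (integral_nonneg fun y => sq_nonneg _)]
  refine integral_le_of_lintegral_ofReal_le ((hDx x).pow_const 2) (fun y => sq_nonneg _)
    (mul_nonneg (abs_nonneg C) (hV x)) ((hsq x).trans (ENNReal.ofReal_le_ofReal ?_))
  exact mul_le_mul_of_nonneg_right (le_abs_self C) (hV x)

theorem geometricDrift_of_lintegral_ofReal_le {P : Kernel X X} {K : Set X} {V : X → ℝ} {l b : ℝ}
    (hV : Measurable V) (hV1 : ∀ x, 1 ≤ V x) (hl0 : 0 ≤ l) (hl1 : l < 1) (hb : 0 ≤ b)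
    (hdrift : ∀ x, ∫⁻ y, ENNReal.ofReal (V y) ∂(P x)
      ≤ ENNReal.ofReal (l * V x + b * K.indicator (fun _ => 1) x)) :
    GeometricDrift P V l b ∧
      ∀ x, ∫ y, V y ∂(P x) ≤ l * V x + b * K.indicator (fun _ => 1) x := by
  have hV0 : ∀ x, 0 ≤ V x := fun x => zero_le_one.trans (hV1 x)
  have hindicator : ∀ x, K.indicator (fun _ => (1 : ℝ)) x ∈ Set.Icc 0 1 := fun x =>
    ⟨Set.indicator_nonneg (fun _ _ => zero_le_one) x,
      Set.indicator_le_self' (fun _ _ => zero_le_one) x⟩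
  have hle : ∀ x, ∫ y, V y ∂(P x) ≤ l * V x + b * K.indicator (fun _ => 1) x := fun x =>
    integral_le_of_lintegral_ofReal_le hV hV0 (add_nonneg (mul_nonneg hl0 (hV0 x))
      (mul_nonneg hb (hindicator x).1)) (hdrift x)
  exact ⟨⟨hV, hV1, hl0, hl1, hb, fun x =>
      integrable_of_lintegral_ofReal_lt_top hV hV0 ((hdrift x).trans_lt ENNReal.ofReal_lt_top),
    fun x => (hle x).trans (add_le_add_right (mul_le_of_le_one_right hb (hindicator x).2) _)⟩, hle⟩

end LintegralBounds

section KernelFamily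

variable {X ι : Type*} [MeasurableSpace X] [Fintype ι] [DecidableEq ι]

theorem integral_score_eq_zero {P : (ι → ℝ) → Kernel X X} {θ₀ : ι → ℝ} [IsMarkovKernel (P θ₀)]
    {ε : ℝ} (hε : 0 < ε) (hP : ∀ θ ∈ Metric.ball θ₀ ε, IsMarkovKernel (P θ))
    {p : (ι → ℝ) → X → X → ℝ}
    (hp : ∀ θ ∈ Metric.ball θ₀ ε, Measurable (Function.uncurry (p θ)))
    (hp0 : ∀ θ ∈ Metric.ball θ₀ ε, ∀ x y, 0 ≤ p θ x y)
    (hdensity : ∀ θ ∈ Metric.ball θ₀ ε, ∀ x,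
      P θ x = (P θ₀ x).withDensity fun y => ENNReal.ofReal (p θ x y))
    {V : X → ℝ} (hV : ∀ x, 1 ≤ V x) {i : ι} {D : X → X → ℝ}
    (hdiff : ∀ δ : ℝ, 0 < δ → ∃ η > 0, ∀ t : ℝ, t ≠ 0 → |t| < η → ∀ x, ∀ g : X → ℝ,
      Measurable g → (∀ y, |g y| ≤ V y) →
        |∫ y, g y * ((p (θ₀ + t • (Pi.single i 1 : ι → ℝ)) x y - 1) / t - D x y) ∂(P θ₀ x)|
          ≤ δ * V x)
    {x : X} (hD : Integrable (D x) (P θ₀ x)) :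
    ∫ y, D x y ∂(P θ₀ x) = 0 := by
  have hmass : ∀ θ ∈ Metric.ball θ₀ ε, ∫ y, p θ x y ∂(P θ₀ x) = 1 := fun θ hθ => by
    have := hP θ hθ
    exact integral_eq_one_of_isProbabilityMeasure_withDensity
      ((hp θ hθ).comp measurable_prodMk_left) (hp0 θ hθ x) (hdensity θ hθ x ▸ inferInstance)
  have hVx : 0 < V x := zero_lt_one.trans_le (hV x)
  refine integral_eq_zero_of_tendsto_integral_diffQuotient
    (q := fun t => p (θ₀ + t • Pi.single i 1) x) ?_ hD
    (Metric.tendsto_nhdsWithin_nhds.2 fun r hr => ?_)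
  · filter_upwards [mem_nhdsWithin_of_mem_nhds (Metric.ball_mem_nhds 0 hε)] with t ht
    refine hmass _ ?_
    simpa [mem_ball_iff_norm, norm_smul, Pi.norm_single] using ht
  · obtain ⟨η, hη, hbound⟩ := hdiff (r / 2 / V x) (by positivity)
    refine ⟨η, hη, fun t ht htη => ?_⟩
    have hle := hbound t ht (by simpa using htη) x (fun _ => 1) measurable_const
      fun y => abs_one.trans_le (hV y)
    rw [div_mul_cancel₀ _ hVx.ne'] at hle
    simp only [one_mul] at hle
    rw [Real.dist_0_eq_abs]
    exact hle.trans_lt (half_lt_self hr)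

end KernelFamily

theorem control_variate_clt_general {X : Type*} [MeasurableSpace X] {d : ℕ} {P : Kernel X X}
    [IsMarkovKernel P] {K : Set X} (hK : MeasurableSet K) {δ : ℝ} (hδ : 0 < δ) {m : ℕ}
    {ν : Measure X} [IsProbabilityMeasure ν]
    (hminor : ∀ x ∈ K, ∀ A, MeasurableSet A → ENNReal.ofReal δ * ν A ≤ kpow P m x A)
    {V : X → ℝ} (hV : Measurable V) (hV1 : ∀ x, 1 ≤ V x)
    {l b : ℝ} (hl0 : 0 ≤ l) (hl1 : l < 1) (hb : 0 ≤ b)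
    (hdrift : ∀ x, ∫⁻ y, ENNReal.ofReal (V y) ∂(P x)
      ≤ ENNReal.ofReal (l * V x + b * K.indicator (fun _ => 1) x))
    {D : Fin d → X → X → ℝ} (hD : ∀ i, Measurable (Function.uncurry (D i)))
    (hDmean : ∀ i x, ∫ y, D i x y ∂(P x) = 0)
    (hDsq : ∀ i, ∃ C : ℝ, ∀ x,
      ∫⁻ y, ENNReal.ofReal (D i x y ^ 2) ∂(P x) ≤ ENNReal.ofReal (C * V x))
    {π : Measure X} [IsProbabilityMeasure π] (hπ : π.bind (fun x => P x) = π)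
    (hπV : ∫⁻ x, ENNReal.ofReal (V x) ∂π < ⊤)
    {u f : X → ℝ} {α : ℝ} (hu : Measurable u) {c : ℝ} (huc : ∀ x, |u x| ≤ c * √(V x))
    (hPoisson : ∀ x, u x - ∫ y, u y ∂(P x) = f x - α)
    {S : Matrix (Fin (d + 1)) (Fin (d + 1)) ℝ}
    (hS00 : S 0 0 = ∫ x, (∫ y, u y ^ 2 ∂(P x) - (∫ y, u y ∂(P x)) ^ 2) ∂π)
    (hS0i : ∀ i : Fin d, S 0 i.succ = ∫ x, ∫ y, u y * D i x y ∂(P x) ∂π)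
    (hSi0 : ∀ i : Fin d, S i.succ 0 = ∫ x, ∫ y, u y * D i x y ∂(P x) ∂π)
    (hSij : ∀ i j : Fin d, S i.succ j.succ = ∫ x, ∫ y, D i x y * D j x y ∂(P x) ∂π)
    {μ : Measure X} [IsProbabilityMeasure μ] (hμV : ∫⁻ x, ENNReal.ofReal (V x) ∂μ < ⊤)
    {Pμ : Measure (ℕ → X)} (hch : IsMarkovChainLaw μ P Pμ)
    {κ : Type*} [Fintype κ] {C : Matrix (Fin (d + 1)) κ ℝ} (hC : C * C.transpose = S) :
    haveI := hch.1
    TendstoInDistribution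
      (fun (n : ℕ) ω (i : Fin d) => (1 / (n : ℝ) * ∑ j ∈ Finset.range n, f (ω j) - α)
        * ∑ j ∈ Finset.range n, D i (ω j) (ω (j + 1))) atTop
      (fun w i => C.mulVec w 0 * C.mulVec w i.succ) (fun _ => Pμ)
      (Measure.pi fun _ => gaussianReal 0 1) := by
  have hV0 : ∀ x, 0 ≤ V x := fun x => zero_le_one.trans (hV1 x)
  obtain ⟨hgeom, hdriftK⟩ := geometricDrift_of_lintegral_ofReal_le hV hV1 hl0 hl1 hb hdrift
  have hπint := integrable_of_lintegral_ofReal_lt_top hV hV0 hπV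
  have hμint := integrable_of_lintegral_ofReal_lt_top hV hV0 hμV
  have hergodic := hgeom.isVErgodic_of_minorization hK hdriftK hδ hminor hπ hπint
  have hu2 := sq_mem_weightedBounded_of_abs_le_mul_sqrt hV0 hu huc
  have hDmem : ∀ i, D i ∈ martingaleIncrements P V := fun i =>
    (hDsq i).elim fun _ => mem_martingaleIncrements_of_lintegral_ofReal_sq_le hV0 (hD i) (hDmean i)
  rw [hgeom.eq_incrementCovariance_cons_poissonIncrement hu hu2 hDmem hS00 hS0i hSi0 hSij] at hC
  have := hch.1
  exact hch.tendstoInDistribution_controlVariate hgeom hergodic hπint hμint hDmem hu hu2 hPoisson hC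

/-- Proposition 3.2: under Assumption 1, the control-variate estimator
`(α_n − α(θ₀))·∇L_n(θ₀)` converges in distribution to `Z₀·(Z₁,…,Z_d)` where
`Z = (Z₀,…,Z_d)` is a centered Gaussian vector with covariance `Σ`. -/
theorem control_variate_clt {X : Type*} [MeasurableSpace X] (d : ℕ)
    (θ₀ : Fin d → ℝ) (ε : ℝ) (hε : 0 < ε)
    (P : (Fin d → ℝ) → Kernel X X)
    (hPmarkov : ∀ θ ∈ Metric.ball θ₀ ε, IsMarkovKernel (P θ))
    [IsMarkovKernel (P θ₀)]
    -- densities with respect to `P θ₀`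
    (p : (Fin d → ℝ) → X → X → ℝ)
    (hp_meas : ∀ θ ∈ Metric.ball θ₀ ε, Measurable (Function.uncurry (p θ)))
    (hp_nonneg : ∀ θ ∈ Metric.ball θ₀ ε, ∀ x y, 0 ≤ p θ x y)
    (hp_density : ∀ θ ∈ Metric.ball θ₀ ε, ∀ x,
      (P θ) x = ((P θ₀) x).withDensity fun y => ENNReal.ofReal (p θ x y))
    (hp_one : ∀ x y, p θ₀ x y = 1)
    -- differentiability of the densities at `θ₀` with partial derivatives `dp i`
    (dp : Fin d → X → X → ℝ)
    (hdp_meas : ∀ i, Measurable (Function.uncurry (dp i)))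
    (hdp : ∀ x y, HasFDerivAt (fun θ => p θ x y)
      (∑ i : Fin d, dp i x y • (ContinuousLinearMap.proj i : (Fin d → ℝ) →L[ℝ] ℝ)) θ₀)
    -- (i) ψ-irreducibility
    (ψ : Measure X) [SigmaFinite ψ] (hψ : ψ ≠ 0)
    (hirr : ∀ θ ∈ Metric.ball θ₀ ε, ∀ A : Set X, MeasurableSet A → 0 < ψ A →
      ∀ x, ∃ n : ℕ, 0 < (kpow (P θ) n) x A)
    -- (ii) minorization on the small set `K`
    (K : Set X) (hK : MeasurableSet K) (δ : ℝ) (hδ : 0 < δ) (m : ℕ)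
    (ν : Measure X) [IsProbabilityMeasure ν]
    (hminor : ∀ θ ∈ Metric.ball θ₀ ε, ∀ x ∈ K, ∀ A : Set X, MeasurableSet A →
      ENNReal.ofReal δ * ν A ≤ (kpow (P θ) m) x A)
    -- (iii) drift condition
    (V : X → ℝ) (hVmeas : Measurable V) (hV1 : ∀ x, 1 ≤ V x)
    (l b : ℝ) (hl0 : 0 < l) (hl1 : l < 1) (hb : 0 ≤ b)
    (hdrift : ∀ θ ∈ Metric.ball θ₀ ε, ∀ x,
      ∫⁻ y, ENNReal.ofReal (V y) ∂((P θ) x)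
        ≤ ENNReal.ofReal (l * V x + b * K.indicator (fun _ => 1) x))
    -- (iv) finiteness of `|||P^{(i)}(θ₀)|||_V` and differentiability in `V`-operator norm
    (hPi_bdd : ∀ i : Fin d, ∃ C : ℝ, ∀ x, ∀ g : X → ℝ, Measurable g → (∀ y, |g y| ≤ V y) →
      |∫ y, g y * dp i x y ∂((P θ₀) x)| ≤ C * V x)
    (hPi_diff : ∀ i : Fin d, ∀ δ' : ℝ, 0 < δ' → ∃ η > 0, ∀ h : ℝ, h ≠ 0 → |h| < η →
      ∀ x, ∀ g : X → ℝ, Measurable g → (∀ y, |g y| ≤ V y) →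
        |∫ y, g y * ((p (θ₀ + h • (Pi.single i 1 : Fin d → ℝ)) x y - 1) / h - dp i x y) ∂((P θ₀) x)|
          ≤ δ' * V x)
    -- (v) `sup_x g_{ii}(x)/V(x) < ∞`
    (hgV : ∀ i : Fin d, ∃ C : ℝ, ∀ x,
      ∫⁻ y, ENNReal.ofReal ((dp i x y) ^ 2) ∂((P θ₀) x) ≤ ENNReal.ofReal (C * V x))
    -- (vi) `sup_x |f(x)|/√V(x) < ∞`
    (f : X → ℝ) (hf_meas : Measurable f)
    (hf_bdd : ∃ κ : ℝ, ∀ x, |f x| ≤ κ * Real.sqrt (V x))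
    -- invariant probability measure with `πV < ∞`
    (π : Measure X) [IsProbabilityMeasure π]
    (hπ_inv : π.bind (fun x => (P θ₀) x) = π)
    (hπV : ∫⁻ x, ENNReal.ofReal (V x) ∂π < ⊤)
    (α : ℝ) (hα : α = ∫ x, f x ∂π)
    -- solution of Poisson's equation
    (fhat : X → ℝ) (hfhat_meas : Measurable fhat)
    (c : ℝ) (hc : 0 ≤ c) (hfhat_bdd : ∀ x, |fhat x| ≤ c * Real.sqrt (V x))
    (hPoisson : ∀ x, fhat x - ∫ y, fhat y ∂((P θ₀) x) = f x - α)
    -- the (d+1)×(d+1) covariance matrix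
    (Sig : Matrix (Fin (d + 1)) (Fin (d + 1)) ℝ)
    (hSig00 : Sig 0 0 = ∫ x, (∫ y, (fhat y) ^ 2 ∂((P θ₀) x)
      - (∫ y, fhat y ∂((P θ₀) x)) ^ 2) ∂π)
    (hSig0i : ∀ i : Fin d, Sig 0 i.succ = ∫ x, ∫ y, fhat y * dp i x y ∂((P θ₀) x) ∂π)
    (hSigi0 : ∀ i : Fin d, Sig i.succ 0 = ∫ x, ∫ y, fhat y * dp i x y ∂((P θ₀) x) ∂π)
    (hSigij : ∀ i j : Fin d,
      Sig i.succ j.succ = ∫ x, ∫ y, dp i x y * dp j x y ∂((P θ₀) x) ∂π)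
    -- the chain with initial distribution `μ`
    (μ : Measure X) [IsProbabilityMeasure μ]
    (hμV : ∫⁻ x, ENNReal.ofReal (V x) ∂μ < ⊤)
    (Pμ : Measure (ℕ → X)) (hPμ : IsMarkovChainLaw μ (P θ₀) Pμ)
    (A : ℕ → (ℕ → X) → ℝ)
    (hA : ∀ n ω, A n ω = (1 / (n : ℝ)) * ∑ j ∈ Finset.range n, f (ω j))
    (M : ℕ → (ℕ → X) → Fin d → ℝ)
    (hM : ∀ n ω i, M n ω i = ∑ j ∈ Finset.range n, dp i (ω j) (ω (j + 1))) :
    ∀ C : Matrix (Fin (d + 1)) (Fin (d + 1)) ℝ, C * C.transpose = Sig →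
      ∀ φ : BoundedContinuousFunction (Fin d → ℝ) ℝ,
        Tendsto (fun n : ℕ => ∫ ω, φ (fun i => (A n ω - α) * M n ω i) ∂Pμ)
          atTop
          (nhds (∫ w, φ (fun i : Fin d => (C.mulVec w) 0 * (C.mulVec w) i.succ)
            ∂(Measure.pi fun _ : Fin (d + 1) => gaussianReal 0 1))) := by
  intro C hC φ
  have hθ₀ := Metric.mem_ball_self (x := θ₀) hε
  have hint : ∀ i x, Integrable (dp i x) (P θ₀ x) := fun i x => (hgV i).elim fun _ ha =>
    (memLp_two_of_lintegral_ofReal_sq_le ((hdp_meas i).comp measurable_prodMk_left)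
      (ha x)).integrable one_le_two
  have hclt := control_variate_clt_general hK hδ (hminor θ₀ hθ₀) hVmeas hV1 hl0.le hl1 hb
    (hdrift θ₀ hθ₀) hdp_meas (fun i x => integral_score_eq_zero hε hPmarkov hp_meas hp_nonneg
      hp_density hV1 (hPi_diff i) (hint i x)) hgV hπ_inv hπV hfhat_meas hfhat_bdd hPoisson
    hSig00 hSig0i hSigi0 hSigij hμV hPμ hC
  have := hPμ.1
  simpa only [hA, hM] using tendsto_integral_of_tendstoInDistribution hclt φ

end
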